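/- The composed transformation SR∘T is sound and complete for WLL DCTRSs: for every WLL DCTRS R over a signature F, (soundness) for every s ∈ T(F,V) and every term t over the signature of SR(T(R)), if ⟨s̄⟩ →*_{SR(T(R))} t, then s →*_R t̂ whenever the backtranslation t̂ is defined; and (completeness) for all s, t ∈ T(F,V), s →*_R t implies ⟨s̄⟩ →*_{SR(T(R))} ⟨t̄⟩. -/

import Mathlib

set_option autoImplicit false

/-- First-order terms over a signature `F` and variables `V`. -/
inductive Term (F : Type) (V : Type) : Type where
  | var : V → Term F V
  | app : F → List (Term F V) → Term F V

namespace Term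

variable {F V G W : Type}

/-- Application of a substitution. -/
def subst (σ : V → Term F W) : Term F V → Term F W
  | .var x => σ x
  | .app f ts => .app f (ts.attach.map (fun ⟨t, _⟩ => subst σ t))

/-- Renaming of variables. -/
def rename (g : V → W) (t : Term F V) : Term F W := t.subst (fun x => .var (g x))

/-- Mapping of function symbols. -/
def mapF (g : F → G) : Term F V → Term G V
  | .var x => .var x
  | .app f ts => .app (g f) (ts.attach.map (fun ⟨t, _⟩ => mapF g t))

/-- Number of occurrences of the variable `x` in a term. -/
def count [DecidableEq V] (x : V) : Term F V → ℕ
  | .var y => if y = x then 1 else 0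
  | .app _ ts => (ts.attach.map (fun ⟨t, _⟩ => count x t)).sum

/-- The list of variables occurring in a term (with repetitions). -/
def varList : Term F V → List V
  | .var x => [x]
  | .app _ ts => ts.attach.flatMap (fun ⟨t, _⟩ => varList t)

/-- A term is linear if every variable occurs at most once in it. -/
def Linear [DecidableEq V] (t : Term F V) : Prop := ∀ x : V, t.count x ≤ 1

/-- Well-formedness of a term with respect to an arity assignment. -/
inductive WF (ar : F → ℕ) : Term F V → Prop where
  | var (x : V) : WF ar (.var x)
  | app (f : F) (ts : List (Term F V)) :
      ts.length = ar f → (∀ t ∈ ts, WF ar t) → WF ar (.app f ts)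

end Term

/-- Number of occurrences of `x` in a sequence of terms. -/
def seqCount {F V : Type} [DecidableEq V] (x : V) (ts : List (Term F V)) : ℕ :=
  (ts.map (Term.count x)).sum

/-- An oriented conditional rewrite rule `l → r ⇐ s1 ≈ t1, …, sk ≈ tk`. -/
structure CRule (F V : Type) : Type where
  lhs : Term F V
  rhs : Term F V
  conds : List (Term F V × Term F V)

/-- A conditional term rewriting system: a set of conditional rules. -/
abbrev CTRS (F V : Type) := Set (CRule F V)

namespace CRule

variable {F V W : Type}

/-- The sequence `l, t1, …, tk` of "pattern" terms of a rule. -/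
def pats (ρ : CRule F V) : List (Term F V) := ρ.lhs :: ρ.conds.map Prod.snd

/-- The sequence `r, s1, …, sk` of "source" terms of a rule. -/
def srcs (ρ : CRule F V) : List (Term F V) := ρ.rhs :: ρ.conds.map Prod.fst

/-- Weak left-linearity: `|l,t1,…,tk|_x = 1` for every `x ∈ Var(r,s1,…,sk)`. -/
def WLL [DecidableEq V] (ρ : CRule F V) : Prop :=
  ∀ x : V, 0 < seqCount x ρ.srcs → seqCount x ρ.pats = 1

/-- Determinism: `Var(si) ⊆ Var(l, t1, …, t_{i−1})`. -/
def Det [DecidableEq V] (ρ : CRule F V) : Prop :=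
  ∀ i : ℕ, ∀ h : i < ρ.conds.length, ∀ x : V,
    0 < Term.count x (ρ.conds.get ⟨i, h⟩).1 →
    0 < seqCount x (ρ.lhs :: (ρ.conds.take i).map Prod.snd)

/-- Type 3: `Var(r) ⊆ Var(l, s1, t1, …, sk, tk)`. -/
def Type3 [DecidableEq V] (ρ : CRule F V) : Prop :=
  ∀ x : V, 0 < Term.count x ρ.rhs →
    0 < seqCount x (ρ.lhs :: ρ.conds.flatMap (fun c => [c.1, c.2]))

/-- The left-hand side is a non-variable term. -/
def LhsNonVar (ρ : CRule F V) : Prop := ∀ x : V, ρ.lhs ≠ .var x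

/-- Renaming the variables of a rule. -/
def mapV (g : V → W) (ρ : CRule F V) : CRule F W :=
  ⟨ρ.lhs.rename g, ρ.rhs.rename g, ρ.conds.map (fun c => (c.1.rename g, c.2.rename g))⟩

end CRule

/-- `R` is a deterministic CTRS (of Type 3, left-hand sides non-variable). -/
def IsDCTRS {F V : Type} [DecidableEq V] (R : CTRS F V) : Prop :=
  ∀ ρ ∈ R, ρ.Det ∧ ρ.Type3 ∧ ρ.LhsNonVar

/-- All rules of `R` are weakly left-linear. -/
def IsWLL {F V : Type} [DecidableEq V] (R : CTRS F V) : Prop := ∀ ρ ∈ R, ρ.WLL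

/-- Closure of a relation under contexts (rewriting below the root). -/
inductive CtxStep {F V : Type} (root : Term F V → Term F V → Prop) :
    Term F V → Term F V → Prop where
  | root {s t : Term F V} : root s t → CtxStep root s t
  | congr {f : F} {pre post : List (Term F V)} {s t : Term F V} :
      CtxStep root s t →
      CtxStep root (.app f (pre ++ s :: post)) (.app f (pre ++ t :: post))

/-- A root rewrite step using a rule of `R`, conditions evaluated with `prev`. -/
def RootStep {F V : Type} (R : CTRS F V) (prev : Term F V → Term F V → Prop)
    (s t : Term F V) : Prop :=
  ∃ ρ ∈ R, ∃ σ : V → Term F V,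
    s = ρ.lhs.subst σ ∧ t = ρ.rhs.subst σ ∧
    ∀ c ∈ ρ.conds, Relation.ReflTransGen prev (c.1.subst σ) (c.2.subst σ)

/-- The level-stratified reduction relation `→_{(n),R}`. -/
def LevelStep {F V : Type} (R : CTRS F V) : ℕ → Term F V → Term F V → Prop
  | 0 => fun _ _ => False
  | n + 1 => CtxStep (RootStep R (LevelStep R n))

/-- The reduction relation `→_R = ⋃_{n} →_{(n),R}`. -/
def Red {F V : Type} (R : CTRS F V) (s t : Term F V) : Prop :=
  ∃ n : ℕ, LevelStep R n s t

/-- Many-step reduction `→*_R`. -/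
def RedStar {F V : Type} (R : CTRS F V) : Term F V → Term F V → Prop :=
  Relation.ReflTransGen (Red R)

/-- `n`-fold composition of a relation. -/
def NFold {α : Type} (r : α → α → Prop) : ℕ → α → α → Prop
  | 0 => fun a b => a = b
  | n + 1 => fun a c => ∃ b, r a b ∧ NFold r n b c

/-- One-hole contexts. -/
inductive Ctx (F V : Type) : Type where
  | hole : Ctx F V
  | app : F → List (Term F V) → Ctx F V → List (Term F V) → Ctx F V

/-- Filling the hole of a context with a term. -/
def Ctx.fill {F V : Type} : Ctx F V → Term F V → Term F V
  | .hole, t => t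
  | .app f pre C post, t => .app f (pre ++ C.fill t :: post)
/-- Signature extended with the fresh symbols `U^ρ_i`. -/
abbrev UF (F V : Type) := F ⊕ (CRule F V × ℕ)

/-- Embedding of terms over `F` into terms over the extended signature `U_R(F)`. -/
def liftF {F V : Type} (t : Term F V) : Term (UF F V) V := t.mapF Sum.inl

/-- The list `X⃗_i` enumerating `Var(l, t1, …, t_{i−1})` in a fixed order. -/
def Xlist {F V : Type} [DecidableEq V] (ρ : CRule F V) (i : ℕ) : List V :=
  (ρ.lhs.varList ++ ((ρ.conds.take (i - 1)).map Prod.snd).flatMap Term.varList).dedup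

/-- A dummy condition (used as a default, never relevant). -/
def dummyCond {F V : Type} (ρ : CRule F V) : Term F V × Term F V := (ρ.lhs, ρ.lhs)

/-- The term `U^ρ_i(t, X⃗_i)`. -/
def uterm {F V : Type} [DecidableEq V] (ρ : CRule F V) (i : ℕ) (t : Term F V) :
    Term (UF F V) V :=
  .app (Sum.inr (ρ, i)) (liftF t :: (Xlist ρ i).map Term.var)

/-- Left-hand side of the `j`-th unraveled rule of `ρ` (j = 0, …, k). -/
def ulhs {F V : Type} [DecidableEq V] (ρ : CRule F V) (j : ℕ) : Term (UF F V) V :=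
  if j = 0 then liftF ρ.lhs
  else uterm ρ j (ρ.conds.getD (j - 1) (dummyCond ρ)).2

/-- Right-hand side of the `j`-th unraveled rule of `ρ` (j = 0, …, k). -/
def urhs {F V : Type} [DecidableEq V] (ρ : CRule F V) (j : ℕ) : Term (UF F V) V :=
  if j = ρ.conds.length then liftF ρ.rhs
  else uterm ρ (j + 1) (ρ.conds.getD j (dummyCond ρ)).1

/-- The unconditional rules `U(ρ)` obtained by unraveling the rule `ρ`. -/
def URules {F V : Type} [DecidableEq V] (ρ : CRule F V) : Set (CRule (UF F V) V) :=
  { r | ∃ j ≤ ρ.conds.length, r = ⟨ulhs ρ j, urhs ρ j, []⟩ }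

/-- The simultaneous unraveling `U(R)` of a DCTRS `R`. -/
def USys {F V : Type} [DecidableEq V] (R : CTRS F V) : CTRS (UF F V) V :=
  ⋃ ρ ∈ R, URules ρ

/-- `R` is ultra-WLL (`U`-WLL): every rule of `U(R)` is WLL. -/
def IsUWLL {F V : Type} [DecidableEq V] (R : CTRS F V) : Prop :=
  ∀ r ∈ USys R, r.WLL
/-- Variables used for terms over the extended signature `F̄`: original
variables plus a countable supply of fresh variables. -/
abbrev WVar (V : Type) := V ⊕ ℕ

/-- The extended signature `F̄` of the SR transformation: the original symbols
(`c̄` for constructors, `f̄` for defined symbols, with extra arguments appended),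
the fresh constant `⊥`, the fresh unary symbol `⟨·⟩`, and the fresh tuple
symbols `[ ]^ρ_j`. -/
inductive SSym (F V : Type) : Type where
  | orig : F → SSym F V
  | bot : SSym F V
  | guard : SSym F V
  | tup : CRule F V → ℕ → SSym F V

/-- Terms over the extended signature `F̄`. -/
abbrev STerm (F V : Type) := Term (SSym F V) (WVar V)

/-- The fresh constant `⊥`. -/
def botT {F V : Type} : STerm F V := .app .bot []

/-- The fresh unary symbol `⟨·⟩`. -/
def guardT {F V : Type} (t : STerm F V) : STerm F V := .app .guard [t]

/-- `t̄`: the embedding of `t ∈ T(F,V)` into `T(F̄,V)` in which all the extra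
arguments of defined symbols are filled with `⊥`.  Here `mOf f` is the number
of conditional `f`-rules (0 for constructors). -/
def barT {F V : Type} (mOf : F → ℕ) : Term F V → STerm F V
  | .var x => .var (Sum.inl x)
  | .app f ts =>
      .app (.orig f)
        ((ts.attach.map (fun ⟨t, _⟩ => barT mOf t)) ++ List.replicate (mOf f) botT)

mutual
/-- `ext(t)`: the embedding of `t ∈ T(F,V)` into `T(F̄,V)` in which the extra
arguments of defined symbols are filled with distinct fresh variables; a
counter is threaded through to keep the fresh variables distinct. -/
def extT {F V : Type} (mOf : F → ℕ) : Term F V → ℕ → STerm F V × ℕ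
  | .var x, c => (.var (Sum.inl x), c)
  | .app f ts, c =>
      let p := extTList mOf ts c
      (.app (.orig f)
         (p.1 ++ (List.range (mOf f)).map (fun k => .var (Sum.inr (p.2 + k)))),
       p.2 + mOf f)

/-- `ext` on lists of terms, threading the fresh-variable counter. -/
def extTList {F V : Type} (mOf : F → ℕ) : List (Term F V) → ℕ → List (STerm F V) × ℕ
  | [], c => ([], c)
  | t :: ts, c =>
      let p := extT mOf t c
      let q := extTList mOf ts p.2
      (p.1 :: q.1, q.2)
end

/-- The backtranslation `t̂`: the partial mapping erasing `⟨·⟩` and the extra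
arguments of defined symbols, recovering a term over `F`. -/
def hatT {F V : Type} (ar : F → ℕ) : STerm F V → Option (Term F V)
  | .var (Sum.inl x) => some (.var x)
  | .var (Sum.inr _) => none
  | .app (.orig f) ts =>
      Option.map (Term.app f)
        ((ts.take (ar f)).attach.mapM (fun t => hatT ar t.1))
  | .app .guard [t] => hatT ar t
  | .app _ _ => none
decreasing_by
  · have h1 : t.1 ∈ ts := List.mem_of_mem_take t.2
    have := List.sizeOf_lt_of_mem h1
    simp only [Term.app.sizeOf_spec]
    omega
  · simp
    omega

/-- Embedding of `T(F,V)` into the terms over the unraveling signature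
`U_R(F)` with extended variables. -/
def liftUV {F V : Type} (t : Term F V) : Term (UF F V) (WVar V) :=
  (t.mapF Sum.inl).rename Sum.inl
/-- The list `V⃗_j` enumerating `Var(t1, …, t_{j−1})` in a fixed order. -/
def Vlist {F V : Type} [DecidableEq V] (ρ : CRule F V) (j : ℕ) : List V :=
  (((ρ.conds.take (j - 1)).map Prod.snd).flatMap Term.varList).dedup

/-- The term `[⟨inner⟩, V⃗_j]^ρ_j` (used in the rewrite rules of `SR(R)`). -/
def tupT {F V : Type} [DecidableEq V] (ρ : CRule F V) (j : ℕ) (inner : STerm F V) :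
    STerm F V :=
  .app (.tup ρ j) (guardT inner :: (Vlist ρ j).map (fun v => .var (Sum.inl v)))

/-- The `j`-th unconditional rule (j = 0, …, k) obtained by the SR
transformation from the `i`-th conditional `f`-rule
`ρ : f(w1,…,wn) → r ⇐ s1 ≈ t1, …, sk ≈ tk` (where `i = idx ρ`). -/
def condSRRule {F V : Type} [DecidableEq V] (mOf : F → ℕ) (idx : CRule F V → ℕ)
    (ρ : CRule F V) (j : ℕ) : CRule (SSym F V) (WVar V) :=
  match ρ.lhs with
  | .var _ => ⟨barT mOf ρ.lhs, barT mOf ρ.rhs, []⟩  -- irrelevant (lhs is never a variable)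
  | .app f ws =>
    let i := idx ρ
    let m := mOf f
    let p := extTList mOf ws 0
    let ws' := p.1
    let c0 := p.2
    let slot : STerm F V → List (STerm F V) := fun mid =>
      (List.range m).map (fun q => if q = i - 1 then mid else .var (Sum.inr (c0 + q)))
    let k := ρ.conds.length
    ⟨(if j = 0 then
        Term.app (SSym.orig f) (ws' ++ slot botT)
      else
        Term.app (SSym.orig f)
          (ws' ++ slot (tupT ρ j (extT mOf (ρ.conds.getD (j - 1) (dummyCond ρ)).2 (c0 + m)).1))),
     (if j = k then
        guardT (barT mOf ρ.rhs)
      else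
        Term.app (SSym.orig f)
          (ws' ++ slot (tupT ρ (j + 1) (barT mOf (ρ.conds.getD j (dummyCond ρ)).1)))),
     []⟩

/-- The unconditional rule `ext(l) → ⟨r̄⟩` obtained by the SR transformation
from an unconditional rule `l → r`. -/
def uncondSRRule {F V : Type} (mOf : F → ℕ) (ρ : CRule F V) : CRule (SSym F V) (WVar V) :=
  ⟨(extT mOf ρ.lhs 0).1, guardT (barT mOf ρ.rhs), []⟩

/-- The auxiliary rule `⟨⟨x⟩⟩ → ⟨x⟩`. -/
def auxGuard {F V : Type} : CRule (SSym F V) (WVar V) :=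
  ⟨guardT (guardT (.var (Sum.inr 0))), guardT (.var (Sum.inr 0)), []⟩

/-- The auxiliary rule shifting `⟨·⟩` upward over the `i`-th argument of the
symbol `f` (and resetting the extra arguments of defined symbols):
`f̄(x1,…,⟨xi⟩,…,xn, z1,…,zm) → ⟨f̄(x1,…,xn, ⊥,…,⊥)⟩`. -/
def auxShift {F V : Type} (ar mOf : F → ℕ) (f : F) (i : ℕ) : CRule (SSym F V) (WVar V) :=
  ⟨Term.app (SSym.orig f)
     (((List.range (ar f)).map
         (fun q => if q = i then guardT (.var (Sum.inr q)) else .var (Sum.inr q))) ++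
      (List.range (mOf f)).map (fun q => .var (Sum.inr (ar f + q)))),
   guardT (Term.app (SSym.orig f)
     (((List.range (ar f)).map (fun q => Term.var (Sum.inr q))) ++
      List.replicate (mOf f) botT)),
   []⟩

/-- The SR transformation `SR(R)`: the unconditional TRS over `F̄` consisting of
the transformed rules of `R` together with the auxiliary rules `R_aux`. -/
def SRSys {F V : Type} [DecidableEq V] (R : CTRS F V) (ar mOf : F → ℕ)
    (idx : CRule F V → ℕ) : CTRS (SSym F V) (WVar V) :=
  { r | (∃ ρ ∈ R, ρ.conds = [] ∧ r = uncondSRRule mOf ρ) ∨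
        (∃ ρ ∈ R, ρ.conds ≠ [] ∧ ∃ j ≤ ρ.conds.length, r = condSRRule mOf idx ρ j) ∨
        r = auxGuard ∨
        (∃ (f : F) (i : ℕ), i < ar f ∧ r = auxShift ar mOf f i) }

/-- Well-formedness of the data `(ar, mOf, idx)` describing the signature `F`
(with arities `ar`), the number `mOf f` of conditional `f`-rules of `R`, and
the ranking `idx` of the conditional rules of each defined symbol by some
arbitrary but fixed order. -/
def GoodSetup {F V : Type} [DecidableEq V] (R : CTRS F V) (ar mOf : F → ℕ)
    (idx : CRule F V → ℕ) : Prop :=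
  (∀ ρ ∈ R, ρ.lhs.WF ar ∧ ρ.rhs.WF ar ∧ ∀ c ∈ ρ.conds, c.1.WF ar ∧ c.2.WF ar) ∧
  (∀ ρ ∈ R, ∃ (f : F) (ws : List (Term F V)), ρ.lhs = Term.app f ws) ∧
  (∀ ρ ∈ R, ρ.conds ≠ [] →
     ∀ (f : F) (ws : List (Term F V)), ρ.lhs = Term.app f ws →
       1 ≤ idx ρ ∧ idx ρ ≤ mOf f) ∧
  (∀ ρ₁, ρ₁ ∈ R → ∀ ρ₂, ρ₂ ∈ R → ρ₁.conds ≠ [] → ρ₂.conds ≠ [] →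
     ∀ (f : F) (ws₁ ws₂ : List (Term F V)),
       ρ₁.lhs = Term.app f ws₁ → ρ₂.lhs = Term.app f ws₂ →
       idx ρ₁ = idx ρ₂ → ρ₁ = ρ₂) ∧
  (∀ (f : F) (i : ℕ), 1 ≤ i → i ≤ mOf f →
     ∃ ρ ∈ R, ρ.conds ≠ [] ∧ (∃ ws : List (Term F V), ρ.lhs = Term.app f ws) ∧ idx ρ = i)
/-- The unraveled system `U(R)` with its rules considered over the extended
variable set `WVar V` (so that it rewrites the terms in the image of `Φ`). -/
def USysW {F V : Type} [DecidableEq V] (R : CTRS F V) : CTRS (UF F V) (WVar V) :=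
  { r | ∃ r' ∈ USys R, r = r'.mapV Sum.inl }

/-- Membership in the set `Φ(t)`: `PhiMem R ar mOf idx t u` states that
`u ∈ Φ(t)`, where `Φ` is the mapping (defined mutually with the auxiliary
mapping `Ψ`) from reachable terms of `T(F̄,V)` to sets of terms of
`T(U_R(F),V)`:
* `Φ(x) = {x}` for a variable `x`;
* `Φ(⟨t⟩) = Φ(t)`;
* for an original symbol `f` applied to arguments `ts`, `Φ` contains
  `f(t'1,…,t'n)` for all `t'p ∈ Φ(tp)` of the first `ar f` arguments (this is
  the clause for constructors and the clause `Ψ(f̄(t⃗,⊥,…,⊥))` for defined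
  symbols), and
* for each `i`-th extra argument of a defined symbol `f` that is a tuple
  `[⟨t'⟩, t'1,…,t'_{nj}]^ρ_j` (where `ρ` is the `i`-th conditional `f`-rule),
  `Φ` contains all terms `U^ρ_j(u', u⃗')` with `u' ∈ Φ(t')` and
  `u⃗' ∈ Φ(σ(X⃗j))`, where `σ` is a substitution with `σ(V⃗j) = t'1,…,t'_{nj}`
  and `σ(ext(w1),…,ext(wn))` equal to the main arguments of the node. -/
inductive PhiMem {F V : Type} [DecidableEq V] (R : CTRS F V) (ar mOf : F → ℕ)
    (idx : CRule F V → ℕ) : STerm F V → Term (UF F V) (WVar V) → Prop where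
  | var (x : WVar V) : PhiMem R ar mOf idx (.var x) (.var x)
  | guard {t : STerm F V} {u : Term (UF F V) (WVar V)} :
      PhiMem R ar mOf idx t u → PhiMem R ar mOf idx (guardT t) u
  | orig {f : F} {ts : List (STerm F V)} {us : List (Term (UF F V) (WVar V))} :
      us.length = (ts.take (ar f)).length →
      (∀ p ∈ List.zip (ts.take (ar f)) us, PhiMem R ar mOf idx p.1 p.2) →
      PhiMem R ar mOf idx (.app (.orig f) ts) (.app (Sum.inl f) us)
  | cond {f : F} {ts : List (STerm F V)} {ρ : CRule F V} {ws : List (Term F V)}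
      {j : ℕ} {tin : STerm F V} {vargs : List (STerm F V)}
      {σ : WVar V → STerm F V} {u : Term (UF F V) (WVar V)}
      {us : List (Term (UF F V) (WVar V))} :
      ρ ∈ R → ρ.conds ≠ [] → ρ.lhs = .app f ws →
      1 ≤ j → j ≤ ρ.conds.length →
      (ts.drop (ar f))[idx ρ - 1]? = some (.app (.tup ρ j) (guardT tin :: vargs)) →
      (Vlist ρ j).map (fun v => σ (Sum.inl v)) = vargs →
      (extTList mOf ws 0).1.map (Term.subst σ) = ts.take (ar f) →
      PhiMem R ar mOf idx tin u →
      us.length = (Xlist ρ j).length →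
      (∀ p ∈ List.zip (Xlist ρ j) us, PhiMem R ar mOf idx (σ (Sum.inl p.1)) p.2) →
      PhiMem R ar mOf idx (.app (.orig f) ts) (.app (Sum.inr (ρ, j)) (u :: us))

/-- The set `Φ(t)`. -/
def Phi {F V : Type} [DecidableEq V] (R : CTRS F V) (ar mOf : F → ℕ)
    (idx : CRule F V → ℕ) (t : STerm F V) : Set (Term (UF F V) (WVar V)) :=
  { u | PhiMem R ar mOf idx t u }

/-- `σ' ∈ Φ(σ)`, the extension of `Φ` to substitutions:
`Dom(σ') ⊆ Dom(σ)` and `xσ' ∈ Φ(xσ)` for every `x ∈ Dom(σ)`. -/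
def PhiSub {F V : Type} [DecidableEq V] (R : CTRS F V) (ar mOf : F → ℕ)
    (idx : CRule F V → ℕ) (σ : WVar V → STerm F V)
    (σ' : WVar V → Term (UF F V) (WVar V)) : Prop :=
  ∀ x : WVar V, PhiMem R ar mOf idx (σ x) (σ' x)

/-- The relation `s ⇝ t`: for each `t' ∈ Φ(t)` there exists `s' ∈ Φ(s)` with
`s' →*_{U(R)} t'`. -/
def Leadsto {F V : Type} [DecidableEq V] (R : CTRS F V) (ar mOf : F → ℕ)
    (idx : CRule F V → ℕ) (s t : STerm F V) : Prop :=
  ∀ u, PhiMem R ar mOf idx t u →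
    ∃ u', PhiMem R ar mOf idx s u' ∧ RedStar (USysW R) u' u

/-- A term of `T(F̄,V)` is reachable if it is a subterm of some term reachable
by `SR(R)` from `⟨s̄⟩` for some `s ∈ T(F,V)`. -/
def SRReachable {F V : Type} [DecidableEq V] (R : CTRS F V) (ar mOf : F → ℕ)
    (idx : CRule F V → ℕ) (t : STerm F V) : Prop :=
  ∃ (s : Term F V) (C : Ctx (SSym F V) (WVar V)),
    s.WF ar ∧ RedStar (SRSys R ar mOf idx) (guardT (barT mOf s)) (C.fill t)

/-- The restriction `σ|_X` of a substitution to the variables of a term `t`. -/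
def restrictTo {F V : Type} [DecidableEq V] (σ : WVar V → STerm F V) (t : STerm F V) :
    WVar V → STerm F V :=
  fun x => if 0 < t.count x then σ x else .var x
/-- Embedding of a rule over `F` into the signature `F ⊕ ℕ` extended with the
fresh tuple constructors `tuple_j` (encoded as `Sum.inr j`). -/
def CRule.liftT {F V : Type} (ρ : CRule F V) : CRule (F ⊕ ℕ) V :=
  ⟨ρ.lhs.mapF Sum.inl, ρ.rhs.mapF Sum.inl,
   ρ.conds.map (fun c => (c.1.mapF Sum.inl, c.2.mapF Sum.inl))⟩

/-- The variable `x` occurs somewhere in the rule `ρ`. -/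
def OccursInRule {F V : Type} [DecidableEq V] (ρ : CRule F V) (x : V) : Prop :=
  0 < seqCount x (ρ.lhs :: ρ.rhs :: ρ.conds.flatMap (fun c => [c.1, c.2]))

/-- `ρ'` is a result of applying the transformation `𝕋` to the rule `ρ`:
unconditional rules are kept (embedded into the extended signature); for a
conditional rule, every occurrence of a variable occurring more than once in
`l, t1, …, tk` is replaced by a distinct fresh variable (yielding `l'` and
`t'_1, …, t'_k`), and the condition
`tuple_j(x1,…,xj) ≈ tuple_j(x1σ,…,xjσ)` is appended, where `x1, …, xj` are the
introduced fresh variables and `σ` is the renaming mapping them back to the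
original variables. -/
def IsTRule {F V : Type} [DecidableEq V] (ρ : CRule F V) (ρ' : CRule (F ⊕ ℕ) V) : Prop :=
  (ρ.conds = [] ∧ ρ' = ρ.liftT) ∨
  (ρ.conds ≠ [] ∧
    ∃ (xs : List V) (σ : V → V) (l' : Term (F ⊕ ℕ) V) (ts' : List (Term (F ⊕ ℕ) V)),
      xs.Nodup ∧
      (∀ x ∈ xs, ¬ OccursInRule ρ x) ∧
      (∀ x : V, x ∉ xs → σ x = x) ∧
      ts'.length = ρ.conds.length ∧
      l'.rename σ = ρ.lhs.mapF Sum.inl ∧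
      (∀ (i : ℕ) (h : i < ρ.conds.length) (h' : i < ts'.length),
        (ts'.get ⟨i, h'⟩).rename σ = ((ρ.conds.get ⟨i, h⟩).2).mapF Sum.inl) ∧
      (∀ x ∈ xs, seqCount x (l' :: ts') = 1) ∧
      (∀ x : V, x ∉ xs →
        seqCount x (l' :: ts') =
          if seqCount x ρ.liftT.pats ≤ 1 then seqCount x ρ.liftT.pats else 0) ∧
      ρ' = ⟨l', ρ.rhs.mapF Sum.inl,
            (List.zip (ρ.conds.map (fun c => c.1.mapF Sum.inl)) ts') ++
              [(.app (Sum.inr xs.length) (xs.map Term.var),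
                .app (Sum.inr xs.length) (xs.map (fun x => Term.var (σ x))))]⟩)

/-- `R'` is a result of applying the transformation `𝕋` to the CTRS `R`,
i.e., `R' = { 𝕋(ρ) : ρ ∈ R }`. -/
def IsT {F V : Type} [DecidableEq V] (R : CTRS F V) (R' : CTRS (F ⊕ ℕ) V) : Prop :=
  (∀ ρ ∈ R, ∃ ρ' ∈ R', IsTRule ρ ρ') ∧ (∀ ρ' ∈ R', ∃ ρ ∈ R, IsTRule ρ ρ')

/-- Projection of a term over the extended signature `F ⊕ ℕ` (with the tuple
constructors of `𝕋`) back to a term over `F` (partial). -/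
def unliftT {F V : Type} : Term (F ⊕ ℕ) V → Option (Term F V)
  | .var x => some (.var x)
  | .app (Sum.inl f) ts =>
      Option.map (Term.app f) (ts.attach.mapM (fun t => unliftT t.1))
  | .app (Sum.inr _) _ => none
decreasing_by
  have := List.sizeOf_lt_of_mem t.2
  simp only [Term.app.sizeOf_spec]
  omega

/-!
Soundness of `SR` rests on an invariant of its reductions: `s` *justifies* `t` if `s` reduces in
`R` to everything that `t` encodes. Besides the main arguments, a node `f̄(…)` encodes one partial
rule application for each extra argument `[⟨e⟩, v⃗]` whose left-hand side still matches: an instance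
`lθ` of a rule such that `s →* lθ`, the conditions solved so far hold under `θ`, the instance of
the current condition justifies `e`, and `θ` justifies `v⃗`. A pattern is matched against justified
terms by reading off a substitution; where a variable occurs several times, its value is the common
backtranslation, and such a variable is never copied to a right-hand side or to a later condition.

Completeness is an induction on the derivation: the conditions of a rule are evaluated one after
another in its extra argument, and the resulting `⟨·⟩` is moved up to the root.

The tuple condition appended by `𝕋` reduces only argumentwise, so it says exactly that `θ x` reduces
to `θ (σ x)` for every introduced variable `x`, where `σ` undoes the renaming. Hence a non-linear
pattern of `R` can be recovered from its linearization, and `R` and `𝕋(R)` have the same reductions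
between terms over `F`.
-/

namespace Term

variable {F G V W X : Type}

@[elab_as_elim, induction_eliminator]
theorem induction {P : Term F V → Prop} (var : ∀ x, P (.var x))
    (app : ∀ f ts, (∀ t ∈ ts, P t) → P (.app f ts)) : ∀ t, P t
  | .var x => var x
  | .app f ts => app f ts fun t _ => induction var app t

@[simp] theorem subst_var (σ : V → Term F W) (x : V) : (var x).subst σ = σ x := by
  rw [subst]

@[simp] theorem subst_app (σ : V → Term F W) (f : F) (ts : List (Term F V)) :
    (app f ts).subst σ = app f (ts.map (subst σ)) := by
  simp [subst]

@[simp] theorem rename_var (g : V → W) (x : V) : (var x : Term F V).rename g = var (g x) :=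
  subst_var _ x

@[simp] theorem rename_app (g : V → W) (f : F) (ts : List (Term F V)) :
    (app f ts).rename g = app f (ts.map (rename g)) :=
  subst_app _ f ts

@[simp] theorem mapF_var (g : F → G) (x : V) : (var x : Term F V).mapF g = var x := by
  rw [mapF]

@[simp] theorem mapF_app (g : F → G) (f : F) (ts : List (Term F V)) :
    (app f ts).mapF g = app (g f) (ts.map (mapF g)) := by
  simp [mapF]

@[simp] theorem varList_var (x : V) : (var x : Term F V).varList = [x] := by
  rw [varList]

@[simp] theorem varList_app (f : F) (ts : List (Term F V)) :
    (app f ts).varList = ts.flatMap varList := by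
  simp [varList]

theorem mem_varList_app {x : V} {f : F} {ts : List (Term F V)} :
    x ∈ (app f ts).varList ↔ ∃ t ∈ ts, x ∈ t.varList := by
  rw [varList_app, List.mem_flatMap]

theorem varList_app_map_var (f : F) (g : W → V) (xs : List W) :
    (app f (xs.map fun x => var (g x))).varList = xs.map g := by
  simp [List.flatMap_map, ← List.map_eq_flatMap]

theorem count_eq_count_varList [DecidableEq V] (x : V) (t : Term F V) :
    t.count x = t.varList.count x := by
  induction t with
  | var y => simp [count, List.count_singleton]
  | app f ts ih =>
    simp only [count, varList_app, List.count_flatMap, List.attach_map_val]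
    exact congrArg List.sum (List.map_congr_left ih)

theorem count_pos_iff [DecidableEq V] {x : V} {t : Term F V} : 0 < t.count x ↔ x ∈ t.varList := by
  rw [count_eq_count_varList, List.count_pos_iff]

theorem varList_mapF (g : F → G) (t : Term F V) : (t.mapF g).varList = t.varList := by
  induction t with
  | var x => simp
  | app f ts ih =>
    rw [mapF_app, varList_app, varList_app, List.flatMap_map]
    exact List.flatMap_congr ih

theorem varList_rename (g : V → W) (t : Term F V) : (t.rename g).varList = t.varList.map g := by
  induction t with
  | var x => simp
  | app f ts ih =>
    rw [rename_app, varList_app, varList_app, List.flatMap_map, List.map_flatMap]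
    exact List.flatMap_congr ih

theorem subst_congr {σ τ : V → Term F W} {t : Term F V} (h : ∀ x ∈ t.varList, σ x = τ x) :
    t.subst σ = t.subst τ := by
  induction t with
  | var x => simpa using h
  | app f ts ih =>
    rw [subst_app, subst_app]
    congr 1
    exact List.map_congr_left fun t ht => ih t ht fun x hx => h x (mem_varList_app.2 ⟨t, ht, hx⟩)

theorem subst_subst (σ : V → Term F W) (τ : W → Term F X) (t : Term F V) :
    (t.subst σ).subst τ = t.subst fun x => (σ x).subst τ := by
  induction t with
  | var x => simp
  | app f ts ih =>
    simp only [subst_app, List.map_map]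
    congr 1
    exact List.map_congr_left ih

theorem subst_rename (g : V → W) (τ : W → Term F X) (t : Term F V) :
    (t.rename g).subst τ = t.subst (τ ∘ g) := by
  simp only [rename, subst_subst, subst_var, Function.comp_def]

theorem subst_var_eq_self (t : Term F V) : t.subst var = t := by
  induction t with
  | var x => simp
  | app f ts ih => rw [subst_app, List.map_congr_left ih, List.map_id']

theorem mapF_subst (g : F → G) (σ : V → Term F W) (t : Term F V) :
    (t.subst σ).mapF g = (t.mapF g).subst fun x => (σ x).mapF g := by
  induction t with
  | var x => simp
  | app f ts ih =>
    simp only [subst_app, mapF_app, List.map_map]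
    congr 1
    exact List.map_congr_left ih

theorem WF.length_eq {ar : F → ℕ} {f : F} {ts : List (Term F V)} (h : (Term.app f ts).WF ar) :
    ts.length = ar f := by
  cases h; assumption

theorem WF.of_mem {ar : F → ℕ} {f : F} {ts : List (Term F V)} (h : (Term.app f ts).WF ar)
    {t : Term F V} (ht : t ∈ ts) : t.WF ar := by
  cases h with
  | app _ _ _ h => exact h t ht

end Term

theorem seqCount_eq_count_flatMap {F V : Type} [DecidableEq V] (x : V) (ts : List (Term F V)) :
    seqCount x ts = (ts.flatMap Term.varList).count x := by
  rw [seqCount, List.count_flatMap]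
  exact congrArg List.sum (List.map_congr_left fun t _ => t.count_eq_count_varList x)

theorem seqCount_pos_iff {F V : Type} [DecidableEq V] {x : V} {ts : List (Term F V)} :
    0 < seqCount x ts ↔ ∃ t ∈ ts, x ∈ t.varList := by
  rw [seqCount_eq_count_flatMap, List.count_pos_iff, List.mem_flatMap]

section Reduction

open Relation

variable {F V W : Type} {R : CTRS F V}

theorem CtxStep.mono {r r' : Term F V → Term F V → Prop} (hr : ∀ s t, r s t → r' s t)
    {s t : Term F V} (h : CtxStep r s t) : CtxStep r' s t := by
  induction h with
  | root h => exact .root (hr _ _ h)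
  | congr _ ih => exact .congr ih

theorem LevelStep.succ {n : ℕ} {s t : Term F V} (h : LevelStep R n s t) :
    LevelStep R (n + 1) s t := by
  induction n generalizing s t with
  | zero => exact h.elim
  | succ n ih =>
    refine CtxStep.mono ?_ h
    rintro s t ⟨ρ, hρ, σ, hs, ht, hc⟩
    exact ⟨ρ, hρ, σ, hs, ht, fun c hcρ => ReflTransGen.mono (fun _ _ => ih) _ _ (hc c hcρ)⟩

theorem LevelStep.mono {n m : ℕ} (hnm : n ≤ m) {s t : Term F V} (h : LevelStep R n s t) :
    LevelStep R m s t := by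
  induction hnm with
  | refl => exact h
  | step _ ih => exact ih.succ

theorem RedStar.exists_level {s t : Term F V} (h : RedStar R s t) :
    ∃ n, ReflTransGen (LevelStep R n) s t := by
  induction h with
  | refl => exact ⟨0, .refl⟩
  | tail _ hstep ih =>
    obtain ⟨n, hn⟩ := ih
    obtain ⟨m, hm⟩ := hstep
    exact ⟨max n m, (ReflTransGen.mono (fun _ _ => LevelStep.mono (le_max_left n m)) _ _ hn).tail
      (hm.mono (le_max_right n m))⟩

theorem RedStar.exists_common_level {cs : List (Term F V × Term F V)}
    (h : ∀ c ∈ cs, RedStar R c.1 c.2) :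
    ∃ n, ∀ c ∈ cs, ReflTransGen (LevelStep R n) c.1 c.2 := by
  induction cs with
  | nil => exact ⟨0, by simp⟩
  | cons c cs ih =>
    obtain ⟨n, hn⟩ := ih fun c hc => h c (List.mem_cons_of_mem _ hc)
    obtain ⟨m, hm⟩ := (h c List.mem_cons_self).exists_level
    refine ⟨max n m, List.forall_mem_cons.2 ⟨?_, fun c hc => ?_⟩⟩
    · exact ReflTransGen.mono (fun _ _ => LevelStep.mono (le_max_right n m)) _ _ hm
    · exact ReflTransGen.mono (fun _ _ => LevelStep.mono (le_max_left n m)) _ _ (hn c hc)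

theorem Red.rule {ρ : CRule F V} (hρ : ρ ∈ R) (σ : V → Term F V)
    (h : ∀ c ∈ ρ.conds, RedStar R (c.1.subst σ) (c.2.subst σ)) :
    Red R (ρ.lhs.subst σ) (ρ.rhs.subst σ) := by
  obtain ⟨n, hn⟩ := RedStar.exists_common_level
    (cs := ρ.conds.map fun c => (c.1.subst σ, c.2.subst σ)) (List.forall_mem_map.2 h)
  exact ⟨n + 1, .root ⟨ρ, hρ, σ, rfl, rfl, List.forall_mem_map.1 hn⟩⟩

theorem Red.congr {f : F} {pre post : List (Term F V)} {s t : Term F V} (h : Red R s t) :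
    Red R (.app f (pre ++ s :: post)) (.app f (pre ++ t :: post)) := by
  obtain ⟨_ | n, hn⟩ := h
  · exact hn.elim
  · exact ⟨n + 1, .congr hn⟩

theorem Red.induction {P : Term F V → Term F V → Prop}
    (rule : ∀ ρ ∈ R, ∀ σ : V → Term F V,
      (∀ c ∈ ρ.conds, ReflTransGen P (c.1.subst σ) (c.2.subst σ)) →
        P (ρ.lhs.subst σ) (ρ.rhs.subst σ))
    (congr : ∀ (f : F) (pre post : List (Term F V)) (s t : Term F V), P s t →
      P (.app f (pre ++ s :: post)) (.app f (pre ++ t :: post)))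
    {s t : Term F V} (h : Red R s t) : P s t := by
  obtain ⟨n, hn⟩ := h
  induction n generalizing s t with
  | zero => exact hn.elim
  | succ n ih =>
    change CtxStep _ s t at hn
    induction hn with
    | root hroot =>
      obtain ⟨ρ, hρ, σ, rfl, rfl, hc⟩ := hroot
      exact rule ρ hρ σ fun c hcρ => ReflTransGen.mono (fun _ _ => ih) _ _ (hc c hcρ)
    | congr _ ihctx => exact congr _ _ _ _ _ ihctx

theorem RedStar.congr {f : F} {pre post : List (Term F V)} {s t : Term F V} (h : RedStar R s t) :
    RedStar R (.app f (pre ++ s :: post)) (.app f (pre ++ t :: post)) :=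
  ReflTransGen.lift (fun s => Term.app f (pre ++ s :: post)) (fun _ _ => Red.congr) s t h

theorem RedStar.app_congr {f : F} {ss ts : List (Term F V)}
    (h : List.Forall₂ (RedStar R) ss ts) : RedStar R (.app f ss) (.app f ts) := by
  suffices ∀ pre, RedStar R (.app f (pre ++ ss)) (.app f (pre ++ ts)) from this []
  induction h with
  | nil => exact fun _ => .refl
  | @cons s t ss ts hst _ ih =>
    intro pre
    have hrest := ih (pre ++ [t])
    rw [List.append_assoc, List.append_assoc] at hrest
    exact hst.congr.trans hrest

theorem RedStar.subst {σ τ : W → Term F V} {t : Term F W}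
    (h : ∀ x ∈ t.varList, RedStar R (σ x) (τ x)) : RedStar R (t.subst σ) (t.subst τ) := by
  induction t with
  | var x => simpa using h
  | app f ts ih =>
    rw [Term.subst_app, Term.subst_app]
    refine RedStar.app_congr ?_
    rw [List.forall₂_map_left_iff, List.forall₂_map_right_iff, List.forall₂_same]
    exact fun t ht => ih t ht fun x hx => h x (Term.mem_varList_app.2 ⟨t, ht, hx⟩)

theorem RedStar.map {G : Type} {R' : CTRS G W} (φ : Term F V → Term G W)
    (congr : ∀ f pre post s t, RedStar R' (φ s) (φ t) →
      RedStar R' (φ (.app f (pre ++ s :: post))) (φ (.app f (pre ++ t :: post))))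
    (rule : ∀ ρ ∈ R, ∀ σ : V → Term F V,
      (∀ c ∈ ρ.conds, RedStar R' (φ (c.1.subst σ)) (φ (c.2.subst σ))) →
        RedStar R' (φ (ρ.lhs.subst σ)) (φ (ρ.rhs.subst σ)))
    {s t : Term F V} (h : RedStar R s t) : RedStar R' (φ s) (φ t) := by
  have hstar {a b : Term F V} (hab : ReflTransGen (fun s t => RedStar R' (φ s) (φ t)) a b) :
      RedStar R' (φ a) (φ b) := by
    induction hab with
    | refl => exact .refl
    | tail _ hbc ih => exact ih.trans hbc
  exact hstar <| ReflTransGen.mono (fun _ _ => Red.induction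
    (fun ρ hρ σ hc => rule ρ hρ σ fun c hcρ => hstar (hc c hcρ)) congr) _ _ h

theorem forall₂_trans {α β γ : Type} {r : α → β → Prop} {p : β → γ → Prop} {q : α → γ → Prop}
    (hq : ∀ {a b c}, r a b → p b c → q a c) {as : List α} {bs : List β} {cs : List γ}
    (hab : List.Forall₂ r as bs) (hbc : List.Forall₂ p bs cs) : List.Forall₂ q as cs := by
  induction hab generalizing cs with
  | nil => cases hbc; exact .nil
  | cons h _ ih =>
    cases hbc with
    | cons h' hrest => exact .cons (hq h h') (ih hrest)

theorem forall₂_and_mem {α β : Type} {r : α → β → Prop} {as : List α} {bs : List β}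
    (h : List.Forall₂ r as bs) : List.Forall₂ (fun a b => a ∈ as ∧ r a b) as bs := by
  rw [List.forall₂_iff_zip] at h ⊢
  exact ⟨h.1, fun hab => ⟨(List.of_mem_zip hab).1, h.2 hab⟩⟩

theorem Red.root_or_congr {s t : Term F V} (h : Red R s t) :
    (∃ ρ ∈ R, ∃ σ : V → Term F V, s = ρ.lhs.subst σ ∧ t = ρ.rhs.subst σ) ∨
      ∃ f ss ts, s = .app f ss ∧ t = .app f ts ∧ List.Forall₂ (ReflGen (Red R)) ss ts := by
  obtain ⟨_ | n, hn⟩ := h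
  · exact hn.elim
  · change CtxStep _ s t at hn
    cases hn with
    | root hroot =>
      obtain ⟨ρ, hρ, σ, hs, ht, -⟩ := hroot
      exact .inl ⟨ρ, hρ, σ, hs, ht⟩
    | congr hst =>
      refine .inr ⟨_, _, _, rfl, rfl, List.rel_append (List.forall₂_same.2 fun _ _ => .refl)
        (.cons (.single ⟨n + 1, hst⟩) ?_)⟩
      exact List.forall₂_same.2 fun _ _ => .refl

theorem RedStar.app_inv {f : F} (hf : ∀ ρ ∈ R, ∀ (σ : V → Term F V) ts, ρ.lhs.subst σ ≠ .app f ts)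
    {ss : List (Term F V)} {t : Term F V} (h : RedStar R (.app f ss) t) :
    ∃ ts, t = .app f ts ∧ List.Forall₂ (RedStar R) ss ts := by
  induction h with
  | refl => exact ⟨ss, rfl, (List.forall₂_same.2 fun _ _ => .refl)⟩
  | tail _ hstep ih =>
    obtain ⟨ts, rfl, hts⟩ := ih
    obtain ⟨ρ, hρ, σ, hs, -⟩ | ⟨g, ts', us, hs, rfl, hus⟩ := hstep.root_or_congr
    · exact (hf ρ hρ σ ts hs.symm).elim
    · obtain ⟨rfl, rfl⟩ := Term.app.inj hs
      exact ⟨us, rfl, forall₂_trans (fun h h' => .trans h h'.to_reflTransGen) hts hus⟩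

end Reduction

theorem exists_eq_map_of_forall₂ {α β : Type} {r : β → β → Prop} {xs : List α} (hxs : xs.Nodup)
    {g : α → β} {ts : List β} (h : List.Forall₂ r ts (xs.map g)) :
    ∃ g', ts = xs.map g' ∧ ∀ x ∈ xs, r (g' x) (g x) := by
  classical
  induction xs generalizing ts with
  | nil => cases h; exact ⟨g, rfl, by simp⟩
  | cons x xs ih =>
    rw [List.map_cons] at h
    cases h with
    | @cons t _ _ _ ht hts =>
      obtain ⟨hx, hxs⟩ := List.nodup_cons.1 hxs
      obtain ⟨g', rfl, hg'⟩ := ih hxs hts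
      have hne {y : α} (hy : y ∈ xs) : y ≠ x := fun hyx => hx (hyx ▸ hy)
      refine ⟨Function.update g' x t, ?_, ?_⟩
      · rw [List.map_cons, Function.update_self]
        exact congrArg _ (List.map_congr_left fun y hy => by rw [Function.update_of_ne (hne hy)])
      · refine List.forall_mem_cons.2 ⟨by rwa [Function.update_self], fun y hy => ?_⟩
        rw [Function.update_of_ne (hne hy)]
        exact hg' y hy

/-- Substitutions found separately for the members of a list of terms can be glued, because `P`
determines the value of every variable that they share. -/
theorem exists_common_subst {F V α β : Type} [DecidableEq V]
    {Q : α → Term F V → (V → β) → Prop} {P : V → β → Prop} (σ₀ : V → β)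
    (hQ : ∀ a w σ τ, (∀ x ∈ w.varList, σ x = τ x) → Q a w σ → Q a w τ)
    {as : List α} {ws : List (Term F V)}
    (hP : ∀ x, 1 < (ws.flatMap Term.varList).count x → ∀ u v, P x u → P x v → u = v)
    (h : List.Forall₂ (fun a w => ∃ σ, Q a w σ ∧ ∀ x ∈ w.varList, P x (σ x)) as ws) :
    ∃ σ, List.Forall₂ (fun a w => Q a w σ) as ws ∧
      ∀ x ∈ ws.flatMap Term.varList, P x (σ x) := by
  induction h with
  | nil => exact ⟨σ₀, .nil, by simp⟩
  | @cons a w as ws hw _ ih =>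
    obtain ⟨σ₁, hQ₁, hP₁⟩ := hw
    simp only [List.flatMap_cons, List.count_append] at hP
    obtain ⟨σ₂, hQ₂, hP₂⟩ := ih fun x hx => hP x (by omega)
    let σ : V → β := fun x => if x ∈ w.varList then σ₁ x else σ₂ x
    have hσ₁ : ∀ x ∈ w.varList, σ₁ x = σ x := fun x hx => (if_pos hx).symm
    have hσ₂ : ∀ x ∈ ws.flatMap Term.varList, σ₂ x = σ x := by
      intro x hx
      by_cases hxw : x ∈ w.varList
      · have h₁ := List.count_pos_iff.2 hxw
        have h₂ := List.count_pos_iff.2 hx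
        exact (hP x (by omega) _ _ (hP₂ x hx) (hP₁ x hxw)).trans (hσ₁ x hxw)
      · exact (if_neg hxw).symm
    refine ⟨σ, .cons (hQ a w _ _ hσ₁ hQ₁) ?_, ?_⟩
    · rw [List.forall₂_iff_zip] at hQ₂ ⊢
      refine ⟨hQ₂.1, fun {b v} hbv => hQ b v _ _ (fun x hx => hσ₂ x ?_) (hQ₂.2 hbv)⟩
      exact List.mem_flatMap.2 ⟨v, (List.of_mem_zip hbv).2, hx⟩
    · simp only [List.flatMap_cons, List.mem_append]
      rintro x (hx | hx)
      · exact hσ₁ x hx ▸ hP₁ x hx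
      · exact hσ₂ x hx ▸ hP₂ x hx

section Transform

variable {F V W : Type}

/-- The variables of `l, t₁, …, tⱼ` with repetitions: those instantiated once the first `j`
conditions of the rule have been solved. -/
def CRule.boundVars (ρ : CRule F V) (j : ℕ) : List V :=
  ρ.lhs.varList ++ ((ρ.conds.take j).map Prod.snd).flatMap Term.varList

theorem CRule.boundVars_zero (ρ : CRule F V) : ρ.boundVars 0 = ρ.lhs.varList := by
  simp [boundVars]

theorem CRule.boundVars_succ {ρ : CRule F V} {j : ℕ} {c : Term F V × Term F V}
    (hc : ρ.conds[j]? = some c) : ρ.boundVars (j + 1) = ρ.boundVars j ++ c.2.varList := by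
  simp [boundVars, List.take_add_one, hc]

theorem CRule.boundVars_prefix (ρ : CRule F V) {i j : ℕ} (hij : i ≤ j) :
    ρ.boundVars i <+: ρ.boundVars j := by
  obtain ⟨cs, hcs⟩ := List.take_prefix_take_left (l := ρ.conds) hij
  rw [boundVars, boundVars, ← hcs, List.map_append, List.flatMap_append, ← List.append_assoc]
  exact List.prefix_append _ _

theorem CRule.boundVars_subset (ρ : CRule F V) {i j : ℕ} (hij : i ≤ j) :
    ρ.boundVars i ⊆ ρ.boundVars j :=
  (ρ.boundVars_prefix hij).subset

theorem CRule.boundVars_length (ρ : CRule F V) :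
    ρ.boundVars ρ.conds.length = ρ.pats.flatMap Term.varList := by
  simp [boundVars, pats]

theorem CRule.mem_boundVars_iff [DecidableEq V] {ρ : CRule F V} {j : ℕ} {x : V} :
    x ∈ ρ.boundVars j ↔ x ∈ ρ.lhs.varList ∨ x ∈ Vlist ρ (j + 1) := by
  simp [boundVars, Vlist]

/-- The instances under `θ` of the first `j` conditions of `ρ` are satisfied. -/
def CondsHold (R : CTRS F V) (ρ : CRule F V) (θ : V → Term F V) (j : ℕ) : Prop :=
  ∀ i < j, ∀ c, ρ.conds[i]? = some c → RedStar R (c.1.subst θ) (c.2.subst θ)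

/-- The conditions on a rule under which `SR` simulates it soundly: they combine determinism with
the part of WLL and U-WLL that concerns the variables bound while the conditions are solved. -/
structure SRAdmissible [DecidableEq V] (ρ : CRule F V) : Prop where
  nodup : ∀ j < ρ.conds.length, (ρ.boundVars j).Nodup
  disjoint : ∀ j c, ρ.conds[j]? = some c → List.Disjoint (ρ.boundVars j) c.2.varList
  rhs_once : ∀ x ∈ ρ.rhs.varList, (ρ.boundVars ρ.conds.length).count x = 1
  det : ∀ j c, ρ.conds[j]? = some c → c.1.varList ⊆ ρ.boundVars j

theorem CondsHold.congr [DecidableEq V] {R : CTRS F V} {ρ : CRule F V} {θ θ' : V → Term F V}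
    {j : ℕ} (hA : SRAdmissible ρ) (hθ : ∀ x ∈ ρ.boundVars j, θ x = θ' x) (h : CondsHold R ρ θ j) :
    CondsHold R ρ θ' j := by
  intro i hi c hc
  have hsnd : c.2.varList ⊆ ρ.boundVars j := fun x hx =>
    ρ.boundVars_subset hi (CRule.boundVars_succ hc ▸ List.mem_append_right _ hx)
  rw [← Term.subst_congr fun x hx => hθ x (ρ.boundVars_subset hi.le (hA.det i c hc hx)),
    ← Term.subst_congr fun x hx => hθ x (hsnd hx)]
  exact h i hi c hc

theorem CondsHold.succ {R : CTRS F V} {ρ : CRule F V} {θ : V → Term F V} {j : ℕ}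
    {c : Term F V × Term F V} (h : CondsHold R ρ θ j) (hj : ρ.conds[j]? = some c)
    (hc : RedStar R (c.1.subst θ) (c.2.subst θ)) : CondsHold R ρ θ (j + 1) := by
  intro i hi d hd
  obtain rfl | hlt := (Nat.le_of_lt_succ hi).eq_or_lt
  · obtain rfl : c = d := Option.some.inj (hj.symm.trans hd)
    exact hc
  · exact h i hlt d hd

/-- The rules are well-formed and every conditional `f`-rule has one of the extra arguments of `f̄`
assigned to it. Two rules may share an argument, since the tuple symbols tell them apart. -/
structure SlotSetup (R : CTRS F V) (ar mOf : F → ℕ) (idx : CRule F V → ℕ) : Prop where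
  lhs_wf : ∀ ρ ∈ R, ρ.lhs.WF ar
  rhs_wf : ∀ ρ ∈ R, ρ.rhs.WF ar
  conds_wf : ∀ ρ ∈ R, ∀ c ∈ ρ.conds, c.1.WF ar ∧ c.2.WF ar
  lhs_app : ∀ ρ ∈ R, ∃ f ws, ρ.lhs = .app f ws
  idx_mem : ∀ ρ ∈ R, ρ.conds ≠ [] → ∀ f ws, ρ.lhs = .app f ws → 1 ≤ idx ρ ∧ idx ρ ≤ mOf f

theorem GoodSetup.slotSetup [DecidableEq V] {R : CTRS F V} {ar mOf : F → ℕ} {idx : CRule F V → ℕ}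
    (h : GoodSetup R ar mOf idx) : SlotSetup R ar mOf idx where
  lhs_wf ρ hρ := (h.1 ρ hρ).1
  rhs_wf ρ hρ := (h.1 ρ hρ).2.1
  conds_wf ρ hρ := (h.1 ρ hρ).2.2
  lhs_app := h.2.1
  idx_mem := h.2.2.1

theorem SlotSetup.args_length {R : CTRS F V} {ar mOf : F → ℕ} {idx : CRule F V → ℕ}
    (h : SlotSetup R ar mOf idx) {ρ : CRule F V} (hρ : ρ ∈ R) {f : F} {ws : List (Term F V)}
    (hf : ρ.lhs = .app f ws) : ws.length = ar f :=
  (hf ▸ h.lhs_wf ρ hρ).length_eq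

@[simp] theorem botT_subst (τ : WVar V → STerm F V) : botT.subst τ = botT := by
  simp [botT]

@[simp] theorem guardT_subst (τ : WVar V → STerm F V) (t : STerm F V) :
    (guardT t).subst τ = guardT (t.subst τ) := by
  simp [guardT]

@[simp] theorem barT_var (mOf : F → ℕ) (x : V) : barT mOf (.var x) = .var (.inl x) := by
  rw [barT]

@[simp] theorem barT_app (mOf : F → ℕ) (f : F) (ts : List (Term F V)) :
    barT mOf (.app f ts) =
      .app (.orig f) (ts.map (barT mOf) ++ List.replicate (mOf f) botT) := by
  simp [barT]

theorem tupT_subst [DecidableEq V] (ρ : CRule F V) (j : ℕ) (t : STerm F V)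
    (τ : WVar V → STerm F V) :
    (tupT ρ j t).subst τ =
      .app (.tup ρ j) (guardT (t.subst τ) :: (Vlist ρ j).map fun x => τ (.inl x)) := by
  simp [tupT]

theorem auxShift_lhs_subst (ar mOf : F → ℕ) (f : F) (i : ℕ) (τ : WVar V → STerm F V) :
    (auxShift ar mOf f i).lhs.subst τ = .app (.orig f)
      ((List.range (ar f)).map (fun q => if q = i then guardT (τ (.inr q)) else τ (.inr q)) ++
        (List.range (mOf f)).map fun q => τ (.inr (ar f + q))) := by
  simp [auxShift, Function.comp_def, apply_ite (Term.subst τ)]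

theorem auxShift_rhs_subst (ar mOf : F → ℕ) (f : F) (i : ℕ) (τ : WVar V → STerm F V) :
    (auxShift ar mOf f i).rhs.subst τ = guardT (.app (.orig f)
      ((List.range (ar f)).map (fun q => τ (.inr q)) ++ List.replicate (mOf f) botT)) := by
  simp [auxShift, Function.comp_def]

theorem extTList_forall₂ {mOf : F → ℕ} {P : Term F V → STerm F V → Prop} {ts : List (Term F V)}
    (h : ∀ t ∈ ts, ∀ c, P t (extT mOf t c).1) (c : ℕ) :
    List.Forall₂ P ts (extTList mOf ts c).1 := by
  induction ts generalizing c with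
  | nil => rw [extTList]; exact .nil
  | cons t ts ih =>
    rw [extTList]
    exact .cons (h t List.mem_cons_self c) (ih (fun t ht => h t (List.mem_cons_of_mem _ ht)) _)

theorem extTList_length (mOf : F → ℕ) (ts : List (Term F V)) (c : ℕ) :
    (extTList mOf ts c).1.length = ts.length :=
  (extTList_forall₂ (P := fun _ _ => True) (fun _ _ _ => trivial) c).length_eq.symm

/-- The argument list of a node `f̄` with main arguments `as` and `m` extra arguments, of which
the one with (1-based) number `i` is `mid` and the one at (0-based) position `q` is `z q`
otherwise. -/
def slotArgs {α : Type} (as : List α) (m i : ℕ) (mid : α) (z : ℕ → α) : List α :=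
  as ++ (List.range m).map fun q => if q = i - 1 then mid else z q

section SlotArgs

variable {α β : Type} {as : List α} {m i : ℕ} {z : ℕ → α}

theorem map_slotArgs (g : α → β) (mid : α) :
    (slotArgs as m i mid z).map g = slotArgs (as.map g) m i (g mid) (g ∘ z) := by
  simp [slotArgs, apply_ite g]

theorem slotArgs_const (b : α) : slotArgs as m i b (fun _ => b) = as ++ List.replicate m b := by
  simp [slotArgs, List.map_const']

theorem take_slotArgs {n : ℕ} (hn : as.length = n) (mid : α) :
    (slotArgs as m i mid z).take n = as := by
  simp [slotArgs, ← hn]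

theorem getElem?_slotArgs {n : ℕ} (hn : as.length = n) (hi : 1 ≤ i) (him : i ≤ m) (mid : α) :
    (slotArgs as m i mid z)[n + (i - 1)]? = some mid := by
  rw [slotArgs, List.getElem?_append_right (by omega)]
  simp [hn, show i - 1 < m by omega]

theorem getElem?_slotArgs_of_ne {n q : ℕ} (hn : as.length = n) (hq : q ≠ i - 1) (mid mid' : α) :
    (slotArgs as m i mid z)[n + q]? = (slotArgs as m i mid' z)[n + q]? := by
  simp only [slotArgs, List.getElem?_append_right (hn ▸ Nat.le_add_right n q : as.length ≤ n + q),
    List.getElem?_map, hn, Nat.add_sub_cancel_left]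
  rcases lt_or_ge q m with h | h
  · simp [h, hq]
  · simp [h]

end SlotArgs

variable {mOf : F → ℕ} {idx : CRule F V → ℕ} {ρ : CRule F V} {f : F} {ws : List (Term F V)}

/-- The term `f̄(ext(w₁), …, ext(wₙ), z₁, …, mid, …, zₘ)` occurring in the rules `SR(ρ)`, where
`mid` stands in the extra argument reserved for `ρ`. -/
def srNode (mOf : F → ℕ) (idx : CRule F V → ℕ) (ρ : CRule F V) (f : F) (ws : List (Term F V))
    (mid : STerm F V) : STerm F V :=
  .app (.orig f) (slotArgs (extTList mOf ws 0).1 (mOf f) (idx ρ) mid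
    fun q => .var (.inr ((extTList mOf ws 0).2 + q)))

theorem srNode_subst (mid : STerm F V) (τ : WVar V → STerm F V) :
    (srNode mOf idx ρ f ws mid).subst τ =
      .app (.orig f) (slotArgs ((extTList mOf ws 0).1.map (Term.subst τ)) (mOf f) (idx ρ)
        (mid.subst τ) fun q => τ (.inr ((extTList mOf ws 0).2 + q))) := by
  simp only [srNode, Term.subst_app, map_slotArgs, Function.comp_def, Term.subst_var]

variable [DecidableEq V] {j : ℕ} {c : Term F V × Term F V}

theorem condSRRule_lhs_zero (hf : ρ.lhs = .app f ws) :
    (condSRRule mOf idx ρ 0).lhs = srNode mOf idx ρ f ws botT := by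
  simp [condSRRule, hf, srNode, slotArgs]

theorem condSRRule_lhs_succ (hf : ρ.lhs = .app f ws) (hc : ρ.conds[j]? = some c) :
    (condSRRule mOf idx ρ (j + 1)).lhs = srNode mOf idx ρ f ws
      (tupT ρ (j + 1) (extT mOf c.2 ((extTList mOf ws 0).2 + mOf f)).1) := by
  simp [condSRRule, hf, srNode, slotArgs, List.getD_eq_getElem?_getD, hc]

theorem condSRRule_rhs_of_getElem? (hf : ρ.lhs = .app f ws) (hc : ρ.conds[j]? = some c) :
    (condSRRule mOf idx ρ j).rhs = srNode mOf idx ρ f ws (tupT ρ (j + 1) (barT mOf c.1)) := by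
  have hj : j ≠ ρ.conds.length := (List.getElem?_eq_some_iff.1 hc).1.ne
  simp [condSRRule, hf, srNode, slotArgs, List.getD_eq_getElem?_getD, hc, hj]

theorem condSRRule_rhs_length (hf : ρ.lhs = .app f ws) :
    (condSRRule mOf idx ρ ρ.conds.length).rhs = guardT (barT mOf ρ.rhs) := by
  simp [condSRRule, hf]

end Transform

section Matching

open Relation

variable {F V : Type}

/-- `w` matches `t` with substitution `σ` when the extra arguments in `t` are ignored, that is,
`t` is an instance of `ext(w)` with `σ` on the original variables. -/
inductive Matches (ar : F → ℕ) (σ : V → STerm F V) : Term F V → STerm F V → Prop where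
  | var (x : V) : Matches ar σ (.var x) (σ x)
  | app {f : F} {ws : List (Term F V)} {ts : List (STerm F V)} :
      List.Forall₂ (Matches ar σ) ws (ts.take (ar f)) →
      Matches ar σ (.app f ws) (.app (.orig f) ts)

namespace Matches

variable {ar : F → ℕ} {σ τ : V → STerm F V}

theorem var_iff {x : V} {t : STerm F V} : Matches ar σ (.var x) t ↔ t = σ x :=
  ⟨fun h => by cases h; rfl, fun h => h ▸ .var x⟩

theorem app_iff {f : F} {ws : List (Term F V)} {t : STerm F V} :
    Matches ar σ (.app f ws) t ↔
      ∃ ts, t = .app (.orig f) ts ∧ List.Forall₂ (Matches ar σ) ws (ts.take (ar f)) := by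
  constructor
  · rintro (_ | h)
    exact ⟨_, rfl, h⟩
  · rintro ⟨ts, rfl, h⟩
    exact .app h

theorem congr {w : Term F V} {t : STerm F V} (hστ : ∀ x ∈ w.varList, σ x = τ x)
    (h : Matches ar σ w t) : Matches ar τ w t := by
  induction w generalizing t with
  | var x => rw [var_iff] at h ⊢; simpa [h] using hστ
  | app f ws ih =>
    obtain ⟨ts, rfl, hts⟩ := app_iff.1 h
    exact .app ((forall₂_and_mem hts).imp fun w t hwt =>
      ih w hwt.1 (fun x hx => hστ x (Term.mem_varList_app.2 ⟨w, hwt.1, hx⟩)) hwt.2)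

theorem of_take_eq {f g : F} {ws : List (Term F V)} {ts ts' : List (STerm F V)}
    (htake : ts.take (ar f) = ts'.take (ar f))
    (h : Matches ar σ (.app g ws) (.app (.orig f) ts)) :
    Matches ar σ (.app g ws) (.app (.orig f) ts') := by
  obtain ⟨_, ⟨⟩, hts⟩ := app_iff.1 h
  exact .app (htake ▸ hts)

theorem eqOn {w : Term F V} {t : STerm F V} (h₁ : Matches ar σ w t) (h₂ : Matches ar τ w t) :
    ∀ x ∈ w.varList, σ x = τ x := by
  induction w generalizing t with
  | var x => simpa using (var_iff.1 h₁).symm.trans (var_iff.1 h₂)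
  | app f ws ih =>
    obtain ⟨ts, rfl, hts₁⟩ := app_iff.1 h₁
    obtain ⟨_, ⟨⟩, hts₂⟩ := app_iff.1 h₂
    intro x hx
    obtain ⟨w, hw, hxw⟩ := Term.mem_varList_app.1 hx
    obtain ⟨n, hn, rfl⟩ := List.getElem_of_mem hw
    have hn' := hts₁.length_eq ▸ hn
    exact ih _ hw (hts₁.get hn hn') (hts₂.get hn hn') x hxw

theorem subst_extT {mOf : F → ℕ} (τ : WVar V → STerm F V) {w : Term F V} (hw : w.WF ar)
    (c : ℕ) : Matches ar (fun x => τ (.inl x)) w ((extT mOf w c).1.subst τ) := by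
  induction w generalizing c with
  | var x => rw [extT, Term.subst_var]; exact .var x
  | app f ws ih =>
    rw [extT, Term.subst_app, List.map_append]
    refine .app ?_
    rw [List.take_left' (by rw [List.length_map, extTList_length, hw.length_eq]),
      List.forall₂_map_right_iff]
    exact extTList_forall₂ (fun w hmem c => ih w hmem (hw.of_mem hmem) c) c

theorem subst_srNode {mOf : F → ℕ} {idx : CRule F V → ℕ} {ρ : CRule F V} {f : F}
    {ws : List (Term F V)} (hw : (Term.app f ws).WF ar) (mid : STerm F V)
    (τ : WVar V → STerm F V) :
    Matches ar (fun x => τ (.inl x)) (.app f ws) ((srNode mOf idx ρ f ws mid).subst τ) := by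
  rw [srNode_subst]
  refine .app ?_
  rw [take_slotArgs (by rw [List.length_map, extTList_length, hw.length_eq]),
    List.forall₂_map_right_iff]
  exact extTList_forall₂ (fun w hmem c => subst_extT τ (hw.of_mem hmem) c) 0

end Matches

section Steps

variable [DecidableEq V] {R : CTRS F V} {ar mOf : F → ℕ} {idx : CRule F V → ℕ}

theorem SRSys.root_orig (hS : SlotSetup R ar mOf idx) {r : CRule (SSym F V) (WVar V)}
    (hr : r ∈ SRSys R ar mOf idx) {τ : WVar V → STerm F V} {g : F} {ts' : List (STerm F V)}
    (h : r.rhs.subst τ = .app (.orig g) ts') :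
    ∃ ts, r.lhs.subst τ = .app (.orig g) ts ∧ ts.take (ar g) = ts'.take (ar g) := by
  have guard_ne {t : STerm F V} : (guardT t).subst τ ≠ .app (.orig g) ts' := by simp [guardT]
  obtain ⟨ρ, -, -, rfl⟩ | ⟨ρ, hρ, -, j, hj, rfl⟩ | rfl | ⟨f, i, -, rfl⟩ := hr
  · exact (guard_ne h).elim
  · obtain ⟨f, ws, hf⟩ := hS.lhs_app ρ hρ
    obtain rfl | hlt := hj.eq_or_lt
    · rw [condSRRule_rhs_length hf] at h
      exact (guard_ne h).elim
    · have hlen : ((extTList mOf ws 0).1.map (Term.subst τ)).length = ar f := by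
        rw [List.length_map, extTList_length, hS.args_length hρ hf]
      obtain ⟨mid, hmid⟩ : ∃ mid, (condSRRule mOf idx ρ j).lhs = srNode mOf idx ρ f ws mid := by
        cases j with
        | zero => exact ⟨_, condSRRule_lhs_zero hf⟩
        | succ j => exact ⟨_, condSRRule_lhs_succ hf (List.getElem?_eq_getElem (by omega))⟩
      rw [condSRRule_rhs_of_getElem? hf (List.getElem?_eq_getElem hlt), srNode_subst] at h
      obtain ⟨hfg, rfl⟩ := Term.app.inj h
      obtain rfl := SSym.orig.inj hfg
      rw [hmid, srNode_subst]
      exact ⟨_, rfl, by rw [take_slotArgs hlen, take_slotArgs hlen]⟩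
  · exact (guard_ne h).elim
  · exact (guard_ne h).elim

theorem forall₂_take_of_reflGen_red (hS : SlotSetup R ar mOf idx) {t : STerm F V} {f : F}
    {ts' : List (STerm F V)}
    (h : ReflGen (Red (SRSys R ar mOf idx)) t (.app (.orig f) ts')) :
    ∃ ts, t = .app (.orig f) ts ∧
      List.Forall₂ (ReflGen (Red (SRSys R ar mOf idx))) (ts.take (ar f)) (ts'.take (ar f)) := by
  rcases h with _ | h
  · exact ⟨ts', rfl, List.forall₂_same.2 fun _ _ => .refl⟩
  · obtain ⟨r, hr, τ, rfl, hrhs⟩ | ⟨_, ts, _, rfl, ⟨⟩, hts⟩ := h.root_or_congr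
    · obtain ⟨ts, hts, htake⟩ := SRSys.root_orig hS hr hrhs.symm
      exact ⟨ts, hts, htake ▸ List.forall₂_same.2 fun _ _ => .refl⟩
    · exact ⟨ts, rfl, List.forall₂_take _ hts⟩

theorem Matches.of_reflGen_red (hS : SlotSetup R ar mOf idx) {w : Term F V} {t t' : STerm F V}
    {σ' : V → STerm F V} (hw : w.varList.Nodup) (hm : Matches ar σ' w t')
    (hstep : ReflGen (Red (SRSys R ar mOf idx)) t t') :
    ∃ σ, Matches ar σ w t ∧
      ∀ x ∈ w.varList, ReflGen (Red (SRSys R ar mOf idx)) (σ x) (σ' x) := by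
  induction w generalizing t t' with
  | var x =>
    obtain rfl := Matches.var_iff.1 hm
    exact ⟨fun _ => t, .var x, by simpa using hstep⟩
  | app f ws ih =>
    obtain ⟨ts', rfl, hts'⟩ := Matches.app_iff.1 hm
    obtain ⟨ts, rfl, hts⟩ := forall₂_take_of_reflGen_red hS hstep
    rw [Term.varList_app, List.nodup_flatMap] at hw
    have hback := forall₂_trans (q := fun t w => ∃ σ, Matches ar σ w t ∧
      ∀ x ∈ w.varList, ReflGen (Red (SRSys R ar mOf idx)) (σ x) (σ' x))
      (fun h hwm => ih _ hwm.1 (hw.1 _ hwm.1) hwm.2 h) hts (forall₂_and_mem hts').flip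
    obtain ⟨σ, hσ, hστ⟩ := exists_common_subst (Q := fun t w σ => Matches ar σ w t)
      (P := fun x u => ReflGen (Red (SRSys R ar mOf idx)) u (σ' x)) σ'
      (fun _ _ _ _ => Matches.congr)
      (fun x hx => absurd hx
        (List.nodup_iff_count_le_one.1 (List.nodup_flatMap.2 hw) x).not_gt) hback
    exact ⟨σ, .app hσ.flip, by rwa [Term.varList_app]⟩

end Steps

end Matching

section Invariant

open Relation

variable {F V : Type} {ar : F → ℕ}

theorem mapM_eq_some_iff {α β : Type} {g : α → Option β} {as : List α} {bs : List β} :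
    as.mapM g = some bs ↔ List.Forall₂ (fun a b => g a = some b) as bs := by
  induction as generalizing bs with
  | nil => cases bs <;> simp
  | cons a as ih =>
    cases bs with
    | nil => simp [List.mapM_cons, Option.bind_eq_some_iff]
    | cons b bs => simp [List.mapM_cons, Option.bind_eq_some_iff, ← ih]

theorem exists_forall₂_of_forall₂_exists {α β γ : Type} {p : α → γ → Prop} {q : β → γ → Prop}
    {as : List α} {bs : List β} (h : List.Forall₂ (fun a b => ∃ c, p a c ∧ q b c) as bs) :
    ∃ cs, List.Forall₂ p as cs ∧ List.Forall₂ q bs cs := by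
  induction h with
  | nil => exact ⟨[], .nil, .nil⟩
  | cons h _ ih =>
    obtain ⟨c, hp, hq⟩ := h
    obtain ⟨cs, hps, hqs⟩ := ih
    exact ⟨c :: cs, .cons hp hps, .cons hq hqs⟩

theorem hatT_var (x : V) : hatT ar (.var (.inl x) : STerm F V) = some (.var x) := by
  rw [hatT]

theorem hatT_guardT (t : STerm F V) : hatT ar (guardT t) = hatT ar t := by
  rw [guardT, hatT]

theorem hatT_orig {f : F} {ts : List (STerm F V)} {us : List (Term F V)}
    (h : List.Forall₂ (fun t u => hatT ar t = some u) (ts.take (ar f)) us) :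
    hatT ar (.app (.orig f) ts) = some (.app f us) := by
  rw [hatT, List.mapM_subtype (g := hatT ar) fun _ _ => rfl, List.unattach_attach,
    mapM_eq_some_iff.2 h, Option.map_some]

/-- The content of an extra argument `[eval, sub(V⃗)]^rule_{step+1}`: the first `step` conditions
of `rule` have been solved, `cond` is the one being evaluated, and `sub` is the substitution
determined by the pattern variables bound so far. -/
structure Slot (F V : Type) where
  rule : CRule F V
  step : ℕ
  cond : Term F V × Term F V
  eval : STerm F V
  sub : V → STerm F V

variable [DecidableEq V] {R : CTRS F V} {mOf : F → ℕ} {idx : CRule F V → ℕ}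

/-- The slot `d` occurs in the node with root `f` and arguments `ts`, and its left-hand side still
matches the main arguments of that node. -/
structure Slot.Active (R : CTRS F V) (ar : F → ℕ) (idx : CRule F V → ℕ) (f : F)
    (ts : List (STerm F V)) (d : Slot F V) : Prop where
  mem : d.rule ∈ R
  cond_eq : d.rule.conds[d.step]? = some d.cond
  content : ts[ar f + (idx d.rule - 1)]? =
    some (.app (.tup d.rule (d.step + 1)) (d.eval :: (Vlist d.rule (d.step + 1)).map d.sub))
  lhs_matches : Matches ar d.sub d.rule.lhs (.app (.orig f) ts)

/-- `d` becomes `d'` by rewriting inside its components. -/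
structure Slot.Reduces (r : STerm F V → STerm F V → Prop) (d d' : Slot F V) : Prop where
  rule_eq : d.rule = d'.rule
  step_eq : d.step = d'.step
  cond_eq : d.cond = d'.cond
  eval : ReflGen r d.eval d'.eval
  sub : ∀ x ∈ d'.rule.boundVars d'.step, ReflGen r (d.sub x) (d'.sub x)

mutual

/-- The invariant of `SR`-reductions: `s` reduces in `R` to everything encoded in `t`. At a
node this comprises the main arguments and, for every active slot, an instance of the rule whose
already solved conditions hold in `R`. -/
inductive Justifies (R : CTRS F V) (ar : F → ℕ) (idx : CRule F V → ℕ) :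
    Term F V → STerm F V → Prop where
  | var {s : Term F V} {x : V} : RedStar R s (.var x) → Justifies R ar idx s (.var (.inl x))
  | guard {s : Term F V} {t : STerm F V} :
      Justifies R ar idx s t → Justifies R ar idx s (guardT t)
  | node {s : Term F V} {f : F} {us : List (Term F V)} {ts : List (STerm F V)} :
      RedStar R s (.app f us) → us.length = ar f → us.length = (ts.take (ar f)).length →
      (∀ u t, (u, t) ∈ us.zip (ts.take (ar f)) → Justifies R ar idx u t) →
      (∀ d : Slot F V, d.Active R ar idx f ts → JustifiesSlot R ar idx s d) →
      Justifies R ar idx s (.app (.orig f) ts)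

/-- The part of `Justifies` concerning a single slot. -/
inductive JustifiesSlot (R : CTRS F V) (ar : F → ℕ) (idx : CRule F V → ℕ) :
    Term F V → Slot F V → Prop where
  | intro {s : Term F V} {d : Slot F V} (θ : V → Term F V) :
      RedStar R s (d.rule.lhs.subst θ) → CondsHold R d.rule θ d.step →
      Justifies R ar idx (d.cond.1.subst θ) d.eval →
      (∀ x ∈ d.rule.boundVars d.step, Justifies R ar idx (θ x) (d.sub x)) →
      JustifiesSlot R ar idx s d

end

theorem JustifiesSlot.mono {s s' : Term F V} {d : Slot F V} (hs : RedStar R s' s)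
    (h : JustifiesSlot R ar idx s d) : JustifiesSlot R ar idx s' d := by
  obtain ⟨θ, hlhs, hconds, heval, hsub⟩ := h
  exact ⟨θ, hs.trans hlhs, hconds, heval, hsub⟩

namespace Justifies

variable {s : Term F V}

theorem orig_iff {f : F} {ts : List (STerm F V)} :
    Justifies R ar idx s (.app (.orig f) ts) ↔ ∃ us, RedStar R s (.app f us) ∧ us.length = ar f ∧
      List.Forall₂ (Justifies R ar idx) us (ts.take (ar f)) ∧
        ∀ d : Slot F V, d.Active R ar idx f ts → JustifiesSlot R ar idx s d := by
  constructor
  · rintro (_ | _ | ⟨hs, har, hlen, hus, hd⟩)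
    exact ⟨_, hs, har, List.forall₂_iff_zip.2 ⟨hlen, hus _ _⟩, hd⟩
  · rintro ⟨us, hs, har, hus, hd⟩
    rw [List.forall₂_iff_zip] at hus
    exact .node hs har hus.1 (fun _ _ => hus.2) hd

theorem of_guard {t : STerm F V} (h : Justifies R ar idx s (guardT t)) :
    Justifies R ar idx s t := by
  cases h with
  | guard h => exact h

theorem mono {s' : Term F V} {t : STerm F V} (hs : RedStar R s' s) :
    Justifies R ar idx s t → Justifies R ar idx s' t
  | .var h => .var (hs.trans h)
  | .guard h => .guard (h.mono hs)
  | .node h har hlen hus hd =>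
    .node (hs.trans h) har hlen hus fun d hda => (hd d hda).mono hs

theorem exists_hatT {t : STerm F V} (h : Justifies R ar idx s t) :
    ∃ u, hatT ar t = some u ∧ RedStar R s u := by
  induction t using Term.induction generalizing s with
  | var y =>
    cases h with
    | @var s x h => exact ⟨.var x, hatT_var x, h⟩
  | app g ts ih =>
    rcases h with _ | h | ⟨hs, -, hlen, hus, -⟩
    · obtain ⟨u, hu, hsu⟩ := ih _ (List.mem_singleton_self _) h
      exact ⟨u, (hatT_guardT _).trans hu, hsu⟩
    · have hall := (forall₂_and_mem (List.forall₂_iff_zip.2 ⟨hlen, hus _ _⟩).flip).imp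
        fun t u htu => ih t (List.mem_of_mem_take htu.1) htu.2
      obtain ⟨vs, hvs, husvs⟩ := exists_forall₂_of_forall₂_exists hall
      exact ⟨_, hatT_orig hvs, hs.trans (RedStar.app_congr husvs)⟩

/-- The head of a simulated rule: a term justifying an instance of a pattern `w` reduces to an
instance of `w`. On the variables in `S`, which occur only once in `w`, the instance still
justifies `σ`; on the others it has to be the common backtranslation. -/
theorem exists_subst {S : Set V} {w : Term F V} {σ : V → STerm F V} {t : STerm F V}
    (hS : ∀ x ∈ S, w.varList.count x ≤ 1) (hm : Matches ar σ w t) (h : Justifies R ar idx s t) :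
    ∃ θ, RedStar R s (w.subst θ) ∧ ∀ x ∈ w.varList,
      (x ∈ S → Justifies R ar idx (θ x) (σ x)) ∧ (x ∉ S → hatT ar (σ x) = some (θ x)) := by
  induction w generalizing s t with
  | var x =>
    obtain rfl := Matches.var_iff.1 hm
    by_cases hx : x ∈ S
    · refine ⟨fun _ => s, by rw [Term.subst_var]; exact .refl, ?_⟩
      simpa [hx] using h
    · obtain ⟨u, hu, hsu⟩ := h.exists_hatT
      refine ⟨fun _ => u, by rwa [Term.subst_var], ?_⟩
      simpa [hx] using hu
  | app f ws ih =>
    obtain ⟨ts, rfl, hts⟩ := Matches.app_iff.1 hm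
    obtain ⟨us, hs, -, hus, -⟩ := orig_iff.1 h
    rw [Term.varList_app] at hS ⊢
    have hcount {w : Term F V} (hw : w ∈ ws) (x : V) (hx : x ∈ S) : w.varList.count x ≤ 1 :=
      ((List.infix_of_mem_flatten (List.mem_map_of_mem hw)).count_le x).trans (hS x hx)
    have hall := forall₂_trans (q := fun u w => ∃ θ, RedStar R u (w.subst θ) ∧
      ∀ x ∈ w.varList, (x ∈ S → Justifies R ar idx (θ x) (σ x)) ∧
        (x ∉ S → hatT ar (σ x) = some (θ x))) (fun hu hw => ih _ hw.1 (hcount hw.1) hw.2 hu) hus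
      (forall₂_and_mem hts).flip
    obtain ⟨θ, hθ, hP⟩ := exists_common_subst (Q := fun u w θ => RedStar R u (w.subst θ))
      (P := fun x u => (x ∈ S → Justifies R ar idx u (σ x)) ∧ (x ∉ S → hatT ar (σ x) = some u))
      Term.var (fun u w θ θ' heq hθ => Term.subst_congr heq ▸ hθ)
      (fun x hx u v hu hv => by
        have hxS : x ∉ S := fun hxS => (hS x hxS).not_gt hx
        exact Option.some.inj ((hu.2 hxS).symm.trans (hv.2 hxS))) hall
    refine ⟨θ, hs.trans ?_, hP⟩
    rw [Term.subst_app]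
    exact RedStar.app_congr (List.forall₂_map_right_iff.2 hθ)

theorem app_replicate_bot {f : F} {us : List (Term F V)} {ts : List (STerm F V)} {m : ℕ}
    (hs : RedStar R s (.app f us)) (har : us.length = ar f)
    (hus : List.Forall₂ (Justifies R ar idx) us ts) :
    Justifies R ar idx s (.app (.orig f) (ts ++ List.replicate m botT)) := by
  have hts : ts.length = ar f := hus.length_eq.symm.trans har
  refine orig_iff.2 ⟨us, hs, har, by rwa [List.take_left' hts], fun d hd => ?_⟩
  have hbot := hd.content
  rw [List.getElem?_append_right (by omega), List.getElem?_replicate] at hbot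
  split at hbot <;> simp [botT] at hbot

theorem subst_barT {w : Term F V} (hw : w.WF ar) {θ : V → Term F V} {τ : WVar V → STerm F V}
    (h : ∀ x ∈ w.varList, Justifies R ar idx (θ x) (τ (.inl x))) :
    Justifies R ar idx (w.subst θ) ((barT mOf w).subst τ) := by
  induction w with
  | var x => simpa using h
  | app f ws ih =>
    simp only [barT_app, Term.subst_app, List.map_append, List.map_replicate, botT_subst,
      List.map_map]
    refine app_replicate_bot .refl ((List.length_map _).trans hw.length_eq) ?_
    rw [List.forall₂_map_left_iff, List.forall₂_map_right_iff, List.forall₂_same]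
    exact fun w hmem => ih w hmem (hw.of_mem hmem) fun x hx =>
      h x (Term.mem_varList_app.2 ⟨w, hmem, hx⟩)

end Justifies

end Invariant

section Soundness

open Relation

variable {F V : Type} [DecidableEq V] {R : CTRS F V} {ar mOf : F → ℕ} {idx : CRule F V → ℕ}

theorem Slot.active_of_srNode {ρ : CRule F V} {j : ℕ} {f : F} {ws : List (Term F V)}
    {c : Term F V × Term F V} {e : STerm F V} {τ : WVar V → STerm F V} {ts : List (STerm F V)}
    (hS : SlotSetup R ar mOf idx) (hρ : ρ ∈ R) (hf : ρ.lhs = .app f ws)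
    (hc : ρ.conds[j]? = some c)
    (hts : (srNode mOf idx ρ f ws (tupT ρ (j + 1) e)).subst τ = .app (.orig f) ts) :
    Slot.Active R ar idx f ts ⟨ρ, j, c, guardT (e.subst τ), fun x => τ (.inl x)⟩ where
  mem := hρ
  cond_eq := hc
  content := by
    rw [srNode_subst] at hts
    obtain ⟨-, rfl⟩ := Term.app.inj hts
    have hidx := hS.idx_mem ρ hρ (List.ne_nil_of_mem (List.mem_of_getElem? hc)) f ws hf
    rw [getElem?_slotArgs (by rw [List.length_map, extTList_length, hS.args_length hρ hf])
      hidx.1 hidx.2, tupT_subst]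
  lhs_matches := hts ▸ hf ▸ Matches.subst_srNode (hf ▸ hS.lhs_wf ρ hρ) _ τ

theorem Slot.Active.eq_of_idx_eq {f : F} {ts : List (STerm F V)} {d d' : Slot F V}
    (hd : d.Active R ar idx f ts) (hd' : d'.Active R ar idx f ts)
    (hidx : idx d.rule - 1 = idx d'.rule - 1) :
    ∃ sub', d' = { d with sub := sub' } ∧ ∀ x ∈ d.rule.boundVars d.step, d.sub x = sub' x := by
  have hcontent := hd.content.symm.trans (hidx ▸ hd'.content)
  obtain ⟨rule, step, cond, eval, sub⟩ := d
  obtain ⟨rule', step', cond', eval', sub'⟩ := d'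
  simp only [Option.some.injEq, Term.app.injEq, SSym.tup.injEq, Nat.add_right_cancel_iff,
    List.cons.injEq] at hcontent
  obtain ⟨⟨rfl, rfl⟩, rfl, hsub⟩ := hcontent
  obtain rfl : cond = cond' := Option.some.inj (hd.cond_eq.symm.trans hd'.cond_eq)
  refine ⟨sub', rfl, fun x hx => ?_⟩
  obtain hx | hx := CRule.mem_boundVars_iff.1 hx
  · exact hd.lhs_matches.eqOn hd'.lhs_matches x hx
  · exact List.map_inj_left.1 hsub x hx

/-- `s` reduces to an instance `lθ` of the left-hand side of `ρ` whose first `j` conditions hold,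
and `θ` justifies `σ` on the variables that have been bound exactly once. -/
def PartialMatch (R : CTRS F V) (ar : F → ℕ) (idx : CRule F V → ℕ) (s : Term F V) (ρ : CRule F V)
    (j : ℕ) (σ : V → STerm F V) : Prop :=
  ∃ θ, RedStar R s (ρ.lhs.subst θ) ∧ CondsHold R ρ θ j ∧
    ∀ x ∈ ρ.boundVars j, (ρ.boundVars j).count x ≤ 1 → Justifies R ar idx (θ x) (σ x)

namespace PartialMatch

variable {s : Term F V} {ρ : CRule F V} {j : ℕ} {σ : V → STerm F V}

theorem zero {t : STerm F V} (hm : Matches ar σ ρ.lhs t) (h : Justifies R ar idx s t) :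
    PartialMatch R ar idx s ρ 0 σ := by
  obtain ⟨θ, hs, hθ⟩ := h.exists_subst (S := {x | ρ.lhs.varList.count x ≤ 1}) (fun _ hx => hx) hm
  refine ⟨θ, hs, fun i hi => absurd hi i.not_lt_zero, ?_⟩
  rw [CRule.boundVars_zero]
  exact fun x hx => (hθ x hx).1

theorem succ {f : F} {ts : List (STerm F V)} {c : Term F V × Term F V} {e : STerm F V}
    (hA : SRAdmissible ρ)
    (hact : Slot.Active R ar idx f ts ⟨ρ, j, c, guardT e, σ⟩) (hm : Matches ar σ c.2 e)
    (h : Justifies R ar idx s (.app (.orig f) ts)) : PartialMatch R ar idx s ρ (j + 1) σ := by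
  obtain ⟨-, -, -, -, hslots⟩ := Justifies.orig_iff.1 h
  obtain ⟨θ, hs, hconds, heval, hsub⟩ := hslots _ hact
  obtain ⟨θ', hc, hθ'⟩ :=
    heval.of_guard.exists_subst (S := {x | c.2.varList.count x ≤ 1}) (fun _ hx => hx) hm
  let θ₁ : V → Term F V := fun x => if x ∈ ρ.boundVars j then θ x else θ' x
  have hold : ∀ x ∈ ρ.boundVars j, θ x = θ₁ x := fun x hx => (if_pos hx).symm
  have hnew : ∀ x ∈ c.2.varList, θ' x = θ₁ x := fun x hx =>
    (if_neg fun hx' => hA.disjoint j c hact.cond_eq hx' hx).symm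
  refine ⟨θ₁, ?_, ?_, ?_⟩
  · rwa [← Term.subst_congr fun x hx => hold x (List.mem_append_left _ hx)]
  · refine (CondsHold.congr hA hold hconds).succ hact.cond_eq ?_
    rwa [← Term.subst_congr fun x hx => hold x (hA.det j c hact.cond_eq hx),
      ← Term.subst_congr hnew]
  · rw [CRule.boundVars_succ hact.cond_eq]
    simp only [List.mem_append, List.count_append]
    rintro x (hx | hx) hcount
    · exact hold x hx ▸ hsub x hx
    · exact hnew x hx ▸ (hθ' x hx).1 (Nat.le_trans (Nat.le_add_left _ _) hcount)

theorem justifies_rhs {τ : WVar V → STerm F V} (hρ : ρ ∈ R) (hA : SRAdmissible ρ)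
    (hwf : ρ.rhs.WF ar) (h : PartialMatch R ar idx s ρ ρ.conds.length fun x => τ (.inl x)) :
    Justifies R ar idx s (guardT ((barT mOf ρ.rhs).subst τ)) := by
  obtain ⟨θ, hs, hconds, hθ⟩ := h
  have hstep : Red R (ρ.lhs.subst θ) (ρ.rhs.subst θ) := Red.rule hρ θ fun c hc => by
    obtain ⟨i, hi, rfl⟩ := List.getElem_of_mem hc
    exact hconds i hi _ (List.getElem?_eq_getElem hi)
  refine .guard (.mono (hs.tail hstep) (.subst_barT hwf fun x hx => ?_))
  have hcount := hA.rhs_once x hx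
  exact hθ x (List.count_pos_iff.1 (hcount ▸ Nat.one_pos)) hcount.le

theorem justifies_start {τ : WVar V → STerm F V} {f : F} {ws : List (Term F V)} {mid : STerm F V}
    {c : Term F V × Term F V} (hS : SlotSetup R ar mOf idx) (hρ : ρ ∈ R) (hA : SRAdmissible ρ)
    (hf : ρ.lhs = .app f ws) (hc : ρ.conds[j]? = some c)
    (hnode : Justifies R ar idx s ((srNode mOf idx ρ f ws mid).subst τ))
    (h : PartialMatch R ar idx s ρ j fun x => τ (.inl x)) :
    Justifies R ar idx s
      ((srNode mOf idx ρ f ws (tupT ρ (j + 1) (barT mOf c.1))).subst τ) := by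
  obtain ⟨hj, rfl⟩ := List.getElem?_eq_some_iff.1 hc
  have hlen : ((extTList mOf ws 0).1.map (Term.subst τ)).length = ar f := by
    rw [List.length_map, extTList_length, hS.args_length hρ hf]
  rw [srNode_subst] at hnode ⊢
  obtain ⟨us, hs, har, hus, hslots⟩ := Justifies.orig_iff.1 hnode
  rw [take_slotArgs hlen] at hus
  refine Justifies.orig_iff.2 ⟨us, hs, har, by rwa [take_slotArgs hlen], fun d hd => ?_⟩
  by_cases hslot : idx d.rule - 1 = idx ρ - 1
  · obtain ⟨sub', rfl, (hsub : ∀ x ∈ ρ.boundVars j, τ (.inl x) = sub' x)⟩ :=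
      (Slot.active_of_srNode hS hρ hf hc (srNode_subst ..)).eq_of_idx_eq hd hslot.symm
    obtain ⟨θ, hs, hconds, hθ⟩ := h
    have hθ' : ∀ x ∈ ρ.boundVars j, Justifies R ar idx (θ x) (τ (.inl x)) := fun x hx =>
      hθ x hx (List.nodup_iff_count_le_one.1 (hA.nodup j hj) x)
    have hwf := (hS.conds_wf ρ hρ _ (List.mem_of_getElem? hc)).1
    refine ⟨θ, hs, hconds, .guard (.subst_barT hwf fun x hx => hθ' x (hA.det j _ hc hx)), ?_⟩
    exact fun x hx => (hsub x hx).subst (hθ' x hx)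
  · obtain ⟨g, vs, hg⟩ := hS.lhs_app d.rule hd.mem
    refine hslots d ⟨hd.mem, hd.cond_eq, ?_, ?_⟩
    · rw [getElem?_slotArgs_of_ne hlen hslot, hd.content]
    · have hm := hd.lhs_matches
      rw [hg] at hm ⊢
      exact hm.of_take_eq (by rw [take_slotArgs hlen, take_slotArgs hlen])

end PartialMatch

theorem Justifies.auxShift {s : Term F V} {f : F} {i : ℕ} {τ : WVar V → STerm F V}
    (h : Justifies R ar idx s ((auxShift ar mOf f i).lhs.subst τ)) :
    Justifies R ar idx s ((auxShift ar mOf f i).rhs.subst τ) := by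
  rw [auxShift_lhs_subst] at h
  rw [auxShift_rhs_subst]
  obtain ⟨us, hs, har, hus, -⟩ := Justifies.orig_iff.1 h
  rw [List.take_left' (by simp), List.forall₂_map_right_iff] at hus
  refine .guard (.app_replicate_bot hs har (List.forall₂_map_right_iff.2 (hus.imp ?_)))
  intro u q huq
  split at huq
  · exact huq.of_guard
  · exact huq

theorem Justifies.root {s : Term F V} (hS : SlotSetup R ar mOf idx)
    (hA : ∀ ρ ∈ R, SRAdmissible ρ) {r : CRule (SSym F V) (WVar V)} (hr : r ∈ SRSys R ar mOf idx)
    {τ : WVar V → STerm F V} (h : Justifies R ar idx s (r.lhs.subst τ)) :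
    Justifies R ar idx s (r.rhs.subst τ) := by
  obtain ⟨ρ, hρ, hnil, rfl⟩ | ⟨ρ, hρ, -, j, hj, rfl⟩ | rfl | ⟨f, i, -, rfl⟩ := hr
  · rw [uncondSRRule, guardT_subst]
    refine PartialMatch.justifies_rhs hρ (hA ρ hρ) (hS.rhs_wf ρ hρ) ?_
    rw [hnil]
    exact .zero (Matches.subst_extT τ (hS.lhs_wf ρ hρ) 0) h
  · obtain ⟨f, ws, hf⟩ := hS.lhs_app ρ hρ
    have hwf := hf ▸ hS.lhs_wf ρ hρ
    obtain ⟨mid, hmid, hpart⟩ : ∃ mid, (condSRRule mOf idx ρ j).lhs = srNode mOf idx ρ f ws mid ∧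
        PartialMatch R ar idx s ρ j fun x => τ (.inl x) := by
      cases j with
      | zero =>
        rw [condSRRule_lhs_zero hf] at h ⊢
        exact ⟨_, rfl, .zero (hf ▸ Matches.subst_srNode hwf _ τ) h⟩
      | succ j =>
        have hc := List.getElem?_eq_getElem (show j < ρ.conds.length by omega)
        have hcwf := (hS.conds_wf ρ hρ _ (List.mem_of_getElem? hc)).2
        rw [condSRRule_lhs_succ hf hc] at h ⊢
        exact ⟨_, rfl, .succ (hA ρ hρ) (Slot.active_of_srNode hS hρ hf hc (srNode_subst ..))
          (Matches.subst_extT τ hcwf _) (srNode_subst .. ▸ h)⟩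
    obtain rfl | hlt := hj.eq_or_lt
    · rw [condSRRule_rhs_length hf, guardT_subst]
      exact hpart.justifies_rhs hρ (hA ρ hρ) (hS.rhs_wf ρ hρ)
    · have hc := List.getElem?_eq_getElem hlt
      rw [condSRRule_rhs_of_getElem? hf hc]
      exact hpart.justifies_start hS hρ (hA ρ hρ) hf hc (hmid ▸ h)
  · simp only [auxGuard, guardT_subst] at h ⊢
    exact h.of_guard
  · exact h.auxShift

theorem SRSys.rhs_ne_tup (hS : SlotSetup R ar mOf idx) {r : CRule (SSym F V) (WVar V)}
    (hr : r ∈ SRSys R ar mOf idx) (τ : WVar V → STerm F V) (ρ : CRule F V) (j : ℕ)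
    (ts : List (STerm F V)) : r.rhs.subst τ ≠ .app (.tup ρ j) ts := by
  obtain ⟨ρ, -, -, rfl⟩ | ⟨ρ, hρ, -, j, hj, rfl⟩ | rfl | ⟨f, i, -, rfl⟩ := hr
  · simp [uncondSRRule, guardT]
  · obtain ⟨f, ws, hf⟩ := hS.lhs_app ρ hρ
    obtain rfl | hlt := hj.eq_or_lt
    · simp [condSRRule_rhs_length hf, guardT]
    · rw [condSRRule_rhs_of_getElem? hf (List.getElem?_eq_getElem hlt), srNode_subst]
      simp
  · simp [auxGuard, guardT]
  · simp [auxShift, guardT]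

theorem forall₂_of_reflGen_red_tup (hS : SlotSetup R ar mOf idx) {t : STerm F V} {ρ : CRule F V}
    {j : ℕ} {ts' : List (STerm F V)}
    (h : ReflGen (Red (SRSys R ar mOf idx)) t (.app (.tup ρ j) ts')) :
    ∃ ts, t = .app (.tup ρ j) ts ∧
      List.Forall₂ (ReflGen (Red (SRSys R ar mOf idx))) ts ts' := by
  rcases h with _ | h
  · exact ⟨ts', rfl, List.forall₂_same.2 fun _ _ => .refl⟩
  · obtain ⟨r, hr, τ, -, hrhs⟩ | ⟨_, ts, _, rfl, ⟨⟩, hts⟩ := h.root_or_congr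
    · exact (SRSys.rhs_ne_tup hS hr τ _ _ _ hrhs.symm).elim
    · exact ⟨ts, rfl, hts⟩

theorem Slot.Active.exists_reduces (hS : SlotSetup R ar mOf idx) (hA : ∀ ρ ∈ R, SRAdmissible ρ)
    {f : F} {ts ts' : List (STerm F V)}
    (hstep : Red (SRSys R ar mOf idx) (.app (.orig f) ts) (.app (.orig f) ts'))
    (hts : List.Forall₂ (ReflGen (Red (SRSys R ar mOf idx))) ts ts') {d' : Slot F V}
    (hd' : d'.Active R ar idx f ts') :
    ∃ d : Slot F V, d.Active R ar idx f ts ∧ d.Reduces (Red (SRSys R ar mOf idx)) d' := by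
  obtain ⟨ρ, j, c, e', σ'⟩ := d'
  obtain ⟨hρ, hc, hcontent, hm⟩ := hd'
  dsimp only at hρ hc hcontent hm
  obtain ⟨hlhs, -, hdisj⟩ := List.nodup_append'.1 ((hA ρ hρ).nodup j
    (List.getElem?_eq_some_iff.1 hc).1)
  obtain ⟨hn, hget⟩ := List.getElem?_eq_some_iff.1 hcontent
  have hslot := hts.get (hts.length_eq ▸ hn) hn
  rw [List.get_eq_getElem, List.get_eq_getElem, hget] at hslot
  obtain ⟨_, htup, hargs⟩ := forall₂_of_reflGen_red_tup hS hslot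
  cases hargs with
  | @cons e _ vs _ he hvs =>
  obtain ⟨σ₂, rfl, hσ₂⟩ := exists_eq_map_of_forall₂ (List.nodup_dedup _) hvs
  obtain ⟨σ₁, hm₁, hσ₁⟩ := hm.of_reflGen_red hS hlhs (.single hstep)
  let σ : V → STerm F V := fun x => if x ∈ ρ.lhs.varList then σ₁ x else σ₂ x
  have hσ_lhs : ∀ x ∈ ρ.lhs.varList, σ₁ x = σ x := fun x hx => (if_pos hx).symm
  have hσ_conds : ∀ x ∈ Vlist ρ (j + 1), σ₂ x = σ x := fun x hx =>
    (if_neg fun hx' => hdisj hx' (List.mem_dedup.1 hx)).symm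
  refine ⟨⟨ρ, j, c, e, σ⟩, ⟨hρ, hc, ?_, hm₁.congr hσ_lhs⟩, ⟨rfl, rfl, rfl, he, ?_⟩⟩
  · dsimp only
    rw [← List.map_congr_left hσ_conds, List.getElem?_eq_getElem (hts.length_eq ▸ hn)]
    exact congrArg some htup
  · intro x hx
    obtain hx | hx := CRule.mem_boundVars_iff.1 hx
    · exact (hσ_lhs x hx).subst (motive := fun u => ReflGen _ u _) (hσ₁ x hx)
    · exact (hσ_conds x hx).subst (motive := fun u => ReflGen _ u _) (hσ₂ x hx)

namespace Justifies

theorem of_reflGen {s : Term F V} {t t' : STerm F V} {r : STerm F V → STerm F V → Prop}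
    (h : Justifies R ar idx s t) (hr : ∀ t', r t t' → Justifies R ar idx s t')
    (hstep : ReflGen r t t') : Justifies R ar idx s t' := by
  cases hstep with
  | refl => exact h
  | single hstep => exact hr t' hstep

theorem step (hS : SlotSetup R ar mOf idx) (hA : ∀ ρ ∈ R, SRAdmissible ρ) {s : Term F V}
    {t t' : STerm F V} (h : Justifies R ar idx s t) (hstep : Red (SRSys R ar mOf idx) t t') :
    Justifies R ar idx s t' := by
  refine Justifies.rec (motive_1 := fun s t _ => ∀ t', Red (SRSys R ar mOf idx) t t' →
    Justifies R ar idx s t') (motive_2 := fun s d _ => ∀ d' : Slot F V,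
    d.Reduces (Red (SRSys R ar mOf idx)) d' → JustifiesSlot R ar idx s d')
    ?var ?guard ?node ?slot h t' hstep
  case var =>
    intro s x hs t' hstep
    obtain ⟨r, hr, τ, hlhs, rfl⟩ | ⟨_, _, _, ⟨⟩, -⟩ := hstep.root_or_congr
    exact Justifies.root hS hA hr (hlhs ▸ .var hs)
  case guard =>
    intro s t h ih t' hstep
    obtain ⟨r, hr, τ, hlhs, rfl⟩ | ⟨_, _, _, ⟨⟩, rfl, hts⟩ := hstep.root_or_congr
    · exact Justifies.root hS hA hr (hlhs ▸ .guard h)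
    · cases hts with
      | cons ht hnil => cases hnil; exact .guard (h.of_reflGen ih ht)
  case node =>
    intro s f us ts hs har hlen hus hd ihus ihd t' hstep
    obtain ⟨r, hr, τ, hlhs, rfl⟩ | ⟨_, _, ts', ⟨⟩, rfl, hts⟩ := hstep.root_or_congr
    · exact Justifies.root hS hA hr (hlhs ▸ .node hs har hlen hus hd)
    · refine Justifies.orig_iff.2 ⟨us, hs, har, ?_, fun d' hd' => ?_⟩
      · have hargs : List.Forall₂ (fun u t => Justifies R ar idx u t ∧
            ∀ t', Red (SRSys R ar mOf idx) t t' → Justifies R ar idx u t') us (ts.take (ar f)) :=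
          List.forall₂_iff_zip.2 ⟨hlen, fun hut => ⟨hus _ _ hut, ihus _ _ hut⟩⟩
        exact forall₂_trans (fun h => h.1.of_reflGen h.2) hargs (List.forall₂_take _ hts)
      · obtain ⟨d, hda, hdd'⟩ := hd'.exists_reduces hS hA hstep hts
        exact ihd d hda d' hdd'
  case slot =>
    intro s d θ hs hconds heval hsub iheval ihsub d' hdd'
    obtain ⟨ρ, j, c, e, σ⟩ := d
    obtain ⟨_, _, _, e', σ'⟩ := d'
    obtain ⟨rfl, rfl, rfl, he, hσ⟩ := hdd'
    exact ⟨θ, hs, hconds, heval.of_reflGen iheval he,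
      fun x hx => (hsub x hx).of_reflGen (ihsub x hx) (hσ x hx)⟩

end Justifies

theorem SRSys.sound (hS : SlotSetup R ar mOf idx) (hA : ∀ ρ ∈ R, SRAdmissible ρ) {s : Term F V}
    (hs : s.WF ar) {t : STerm F V}
    (h : RedStar (SRSys R ar mOf idx) (guardT (barT mOf s)) t) :
    ∃ u, hatT ar t = some u ∧ RedStar R s u := by
  suffices Justifies R ar idx s t from this.exists_hatT
  induction h with
  | refl =>
    have hbar := Justifies.subst_barT (R := R) (idx := idx) (mOf := mOf) (τ := Term.var) hs
      fun x _ => .var (s := .var x) .refl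
    rw [Term.subst_var_eq_self, Term.subst_var_eq_self] at hbar
    exact .guard hbar
  | tail _ hstep ih => exact ih.step hS hA hstep

end Soundness

section Completeness

open Relation

theorem Term.WF.subst {F V W : Type} {ar : F → ℕ} {t : Term F V} {θ : V → Term F W} (ht : t.WF ar)
    (hθ : ∀ x ∈ t.varList, (θ x).WF ar) : (t.subst θ).WF ar := by
  induction t with
  | var x => simpa using hθ
  | app f ts ih =>
    rw [Term.subst_app]
    refine .app f _ ((List.length_map _).trans ht.length_eq) (List.forall_mem_map.2 ?_)
    exact fun t hmem => ih t hmem (ht.of_mem hmem) fun x hx =>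
      hθ x (Term.mem_varList_app.2 ⟨t, hmem, hx⟩)

theorem Term.WF.of_subst {F V W : Type} {ar : F → ℕ} {t : Term F V} {θ : V → Term F W}
    (h : (t.subst θ).WF ar) : ∀ x ∈ t.varList, (θ x).WF ar := by
  induction t with
  | var x => simpa using h
  | app f ts ih =>
    rw [Term.subst_app] at h
    intro x hx
    obtain ⟨t, ht, hx⟩ := Term.mem_varList_app.1 hx
    exact ih t ht (h.of_mem (List.mem_map_of_mem ht)) x hx

variable {F V : Type} {mOf : F → ℕ}

/-- The substitution on `T(F̄,V)` induced by `θ`, which resets all extra arguments to `⊥`. -/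
def barSubst (mOf : F → ℕ) (θ : V → Term F V) : WVar V → STerm F V
  | .inl x => barT mOf (θ x)
  | .inr _ => botT

theorem barT_subst_barSubst (θ : V → Term F V) (t : Term F V) :
    (barT mOf t).subst (barSubst mOf θ) = barT mOf (t.subst θ) := by
  induction t with
  | var x => simp [barSubst]
  | app f ts ih =>
    simp only [barT_app, Term.subst_app, List.map_append, List.map_map, List.map_replicate,
      botT_subst]
    congr 2
    exact List.map_congr_left ih

theorem extT_subst_barSubst (θ : V → Term F V) (t : Term F V) (c : ℕ) :
    (extT mOf t c).1.subst (barSubst mOf θ) = barT mOf (t.subst θ) := by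
  induction t generalizing c with
  | var x => simp [extT, barSubst]
  | app f ts ih =>
    have hargs : (extTList mOf ts c).1.map (Term.subst (barSubst mOf θ)) =
        ts.map fun t => barT mOf (t.subst θ) := by
      rw [← List.forall₂_eq_eq_eq, List.forall₂_map_left_iff, List.forall₂_map_right_iff]
      exact (extTList_forall₂ (P := fun t e => e.subst _ = _) ih c).flip
    simp [extT, barSubst, hargs, Function.comp_def]

theorem srNode_botT_subst_barSubst {idx : CRule F V → ℕ} {ρ : CRule F V} {f : F}
    {ws : List (Term F V)} (θ : V → Term F V) :
    (srNode mOf idx ρ f ws botT).subst (barSubst mOf θ) = barT mOf ((Term.app f ws).subst θ) := by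
  rw [← extT_subst_barSubst θ (.app f ws) 0, srNode_subst, extT, Term.subst_app, List.map_append,
    botT_subst]
  simp only [barSubst, slotArgs_const, List.map_map, Function.comp_def, Term.subst_var,
    List.map_const', List.length_range]

variable [DecidableEq V] {R : CTRS F V} {ar : F → ℕ} {idx : CRule F V → ℕ}

theorem SRSys.red {r : CRule (SSym F V) (WVar V)} (hr : r ∈ SRSys R ar mOf idx)
    (τ : WVar V → STerm F V) : Red (SRSys R ar mOf idx) (r.lhs.subst τ) (r.rhs.subst τ) := by
  have hconds : r.conds = [] := by
    obtain ⟨ρ, -, -, rfl⟩ | ⟨ρ, -, -, j, -, rfl⟩ | rfl | ⟨f, i, -, rfl⟩ := hr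
    · rfl
    · rw [condSRRule]; split <;> rfl
    · rfl
    · rfl
  exact .rule hr τ (by simp [hconds])

theorem SRSys.red_guardT_guardT (t : STerm F V) :
    Red (SRSys R ar mOf idx) (guardT (guardT t)) (guardT t) := by
  simpa [auxGuard] using
    SRSys.red (R := R) (ar := ar) (mOf := mOf) (idx := idx) (.inr (.inr (.inl rfl))) fun _ => t

theorem SRSys.red_shift {f : F} {pre post : List (STerm F V)} {u : STerm F V}
    (hlen : (pre ++ u :: post).length = ar f) :
    Red (SRSys R ar mOf idx)
      (.app (.orig f) (pre ++ guardT u :: (post ++ List.replicate (mOf f) botT)))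
      (guardT (.app (.orig f) (pre ++ u :: (post ++ List.replicate (mOf f) botT)))) := by
  let τ : WVar V → STerm F V
    | .inl x => .var (.inl x)
    | .inr q => (pre ++ u :: post)[q]?.getD botT
  have hτ {q : ℕ} (hq : q < (pre ++ u :: post).length) : τ (.inr q) = (pre ++ u :: post)[q] := by
    simp [τ, List.getElem?_eq_getElem hq]
  have hmain : (List.range (ar f)).map (fun q => τ (.inr q)) = pre ++ u :: post := by
    rw [← hlen]
    exact List.ext_getElem (by simp) fun q _ hq => by simp [hτ hq]
  have hguard : (List.range (ar f)).map
      (fun q => if q = pre.length then guardT (τ (.inr q)) else τ (.inr q)) =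
        pre ++ guardT u :: post := by
    rw [← hlen]
    refine List.ext_getElem (by simp) fun q hq _ => ?_
    rw [List.getElem_map, List.getElem_range, hτ (by simpa using hq)]
    grind
  have hextra : (List.range (mOf f)).map (fun q => τ (.inr (ar f + q))) =
      List.replicate (mOf f) botT := by
    simp [τ, ← hlen, List.map_const']
  have hpre : pre.length < ar f := by simp [← hlen]
  have hstep := SRSys.red (R := R) (mOf := mOf) (idx := idx)
    (.inr (.inr (.inr ⟨f, _, hpre, rfl⟩))) τ
  rw [auxShift_lhs_subst, auxShift_rhs_subst, hmain, hguard, hextra] at hstep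
  simpa only [List.append_assoc, List.cons_append] using hstep

/-- A well-formed term `s` is simulated by `SR` as reducing to a well-formed `t`. -/
def Simulates (R : CTRS F V) (ar mOf : F → ℕ) (idx : CRule F V → ℕ) (s t : Term F V) : Prop :=
  s.WF ar → t.WF ar ∧ RedStar (SRSys R ar mOf idx) (barT mOf s) (guardT (barT mOf t))

theorem Simulates.star {s t : Term F V} (h : ReflTransGen (Simulates R ar mOf idx) s t)
    (hs : s.WF ar) :
    t.WF ar ∧ RedStar (SRSys R ar mOf idx) (guardT (barT mOf s)) (guardT (barT mOf t)) := by
  induction h with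
  | refl => exact ⟨hs, .refl⟩
  | tail _ hstep ih =>
    obtain ⟨hwf, hred⟩ := ih
    obtain ⟨hwf', hred'⟩ := hstep hwf
    exact ⟨hwf', (hred.trans (hred'.congr (pre := []) (post := []))).tail
      (SRSys.red_guardT_guardT _)⟩

theorem Simulates.congr {f : F} {pre post : List (Term F V)} {s t : Term F V}
    (h : Simulates R ar mOf idx s t) :
    Simulates R ar mOf idx (.app f (pre ++ s :: post)) (.app f (pre ++ t :: post)) := by
  intro hwf
  obtain ⟨ht, hred⟩ := h (hwf.of_mem (by simp))
  have hlen : (pre ++ t :: post).length = ar f := by simpa using hwf.length_eq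
  refine ⟨.app f _ hlen fun u hu => ?_, ?_⟩
  · simp only [List.mem_append, List.mem_cons] at hu
    obtain hu | rfl | hu := hu
    · exact hwf.of_mem (by simp [hu])
    · exact ht
    · exact hwf.of_mem (by simp [hu])
  · simp only [barT_app, List.map_append, List.map_cons, List.append_assoc, List.cons_append]
    exact hred.congr.tail (SRSys.red_shift (by simpa using hlen))

theorem RedStar.srNode_tupT {ρ : CRule F V} {f : F} {ws : List (Term F V)} {j : ℕ}
    {s t : STerm F V} {τ : WVar V → STerm F V}
    (h : RedStar (SRSys R ar mOf idx) (guardT (s.subst τ)) (guardT (t.subst τ))) :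
    RedStar (SRSys R ar mOf idx) ((srNode mOf idx ρ f ws (tupT ρ j s)).subst τ)
      ((srNode mOf idx ρ f ws (tupT ρ j t)).subst τ) := by
  rw [srNode_subst, srNode_subst, tupT_subst, tupT_subst]
  refine RedStar.app_congr (List.rel_append (List.forall₂_same.2 fun _ _ => .refl) ?_)
  rw [List.forall₂_map_left_iff, List.forall₂_map_right_iff, List.forall₂_same]
  intro q _
  split
  · exact h.congr (pre := [])
  · exact .refl

theorem SRSys.eval_conds (hS : SlotSetup R ar mOf idx) {ρ : CRule F V} (hρ : ρ ∈ R)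
    (hdet : ∀ j c, ρ.conds[j]? = some c → c.1.varList ⊆ ρ.boundVars j) {θ : V → Term F V}
    (hne : ρ.conds ≠ []) (hlhs : (ρ.lhs.subst θ).WF ar)
    (hconds : ∀ c ∈ ρ.conds,
      ReflTransGen (Simulates R ar mOf idx) (c.1.subst θ) (c.2.subst θ)) :
    ∀ j ≤ ρ.conds.length, (∀ x ∈ ρ.boundVars j, (θ x).WF ar) ∧
      RedStar (SRSys R ar mOf idx) (barT mOf (ρ.lhs.subst θ))
        ((condSRRule mOf idx ρ j).lhs.subst (barSubst mOf θ)) := by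
  obtain ⟨f, ws, hf⟩ := hS.lhs_app ρ hρ
  intro j hj
  induction j with
  | zero =>
    rw [CRule.boundVars_zero, condSRRule_lhs_zero hf, srNode_botT_subst_barSubst, hf]
    exact ⟨hf ▸ hlhs.of_subst, .refl⟩
  | succ j ih =>
    obtain ⟨hwf, hred⟩ := ih (by omega)
    have hc := List.getElem?_eq_getElem (show j < ρ.conds.length by omega)
    set c := ρ.conds[j]
    have hcρ := List.mem_of_getElem? hc
    have hcwf := (hS.conds_wf ρ hρ c hcρ).1.subst fun x hx => hwf x (hdet j c hc hx)
    obtain ⟨hcwf', hcred⟩ := Simulates.star (hconds c hcρ) hcwf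
    refine ⟨?_, ?_⟩
    · rw [CRule.boundVars_succ hc]
      exact List.forall_mem_append.2 ⟨hwf, hcwf'.of_subst⟩
    · have hstart := SRSys.red (ar := ar) (mOf := mOf) (idx := idx)
        (.inr (.inl ⟨ρ, hρ, hne, j, by omega, rfl⟩)) (barSubst mOf θ)
      rw [condSRRule_rhs_of_getElem? hf hc] at hstart
      rw [condSRRule_lhs_succ hf hc]
      refine (hred.tail hstart).trans (RedStar.srNode_tupT ?_)
      rwa [barT_subst_barSubst, extT_subst_barSubst]

theorem Simulates.rule (hS : SlotSetup R ar mOf idx) {ρ : CRule F V} (hρ : ρ ∈ R)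
    (hdet : ∀ j c, ρ.conds[j]? = some c → c.1.varList ⊆ ρ.boundVars j)
    (hrhs : ρ.rhs.varList ⊆ ρ.boundVars ρ.conds.length) {θ : V → Term F V}
    (hconds : ∀ c ∈ ρ.conds,
      ReflTransGen (Simulates R ar mOf idx) (c.1.subst θ) (c.2.subst θ)) :
    Simulates R ar mOf idx (ρ.lhs.subst θ) (ρ.rhs.subst θ) := by
  intro hlhs
  suffices (∀ x ∈ ρ.boundVars ρ.conds.length, (θ x).WF ar) ∧ RedStar (SRSys R ar mOf idx)
      (barT mOf (ρ.lhs.subst θ)) ((guardT (barT mOf ρ.rhs)).subst (barSubst mOf θ)) by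
    rw [guardT_subst, barT_subst_barSubst] at this
    exact ⟨(hS.rhs_wf ρ hρ).subst fun x hx => this.1 x (hrhs hx), this.2⟩
  by_cases hnil : ρ.conds = []
  · rw [hnil, List.length_nil, CRule.boundVars_zero]
    refine ⟨hlhs.of_subst, .single ?_⟩
    rw [← extT_subst_barSubst θ ρ.lhs 0]
    exact SRSys.red (.inl ⟨ρ, hρ, hnil, rfl⟩) _
  · obtain ⟨hwf, hred⟩ := SRSys.eval_conds hS hρ hdet hnil hlhs hconds _ le_rfl
    obtain ⟨f, ws, hf⟩ := hS.lhs_app ρ hρ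
    refine ⟨hwf, hred.tail ?_⟩
    rw [← condSRRule_rhs_length hf]
    exact SRSys.red (.inr (.inl ⟨ρ, hρ, hnil, _, le_rfl, rfl⟩)) _

theorem SRSys.complete (hS : SlotSetup R ar mOf idx)
    (hdet : ∀ ρ ∈ R, ∀ j c, ρ.conds[j]? = some c → c.1.varList ⊆ ρ.boundVars j)
    (hrhs : ∀ ρ ∈ R, ρ.rhs.varList ⊆ ρ.boundVars ρ.conds.length) {s t : Term F V}
    (hs : s.WF ar) (h : RedStar R s t) :
    RedStar (SRSys R ar mOf idx) (guardT (barT mOf s)) (guardT (barT mOf t)) := by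
  refine (Simulates.star (ReflTransGen.mono (fun _ _ => ?_) _ _ h) hs).2
  exact Red.induction (fun ρ hρ θ => Simulates.rule hS hρ (hdet ρ hρ) (hrhs ρ hρ))
    fun _ _ _ _ _ => Simulates.congr

end Completeness

section TSplit

open Relation

variable {F V : Type}

theorem CRule.mem_srcs_flatMap {ρ : CRule F V} {x : V} :
    x ∈ ρ.srcs.flatMap Term.varList ↔
      x ∈ ρ.rhs.varList ∨ ∃ c ∈ ρ.conds, x ∈ c.1.varList := by
  simp [srcs]

/-- The presentation of a conditional rule `ρ'` of `𝕋(R)` arising from `ρ`: the variables `xs` are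
those introduced by `𝕋`, the renaming `σ` maps them back, and `cs` are the conditions of `ρ'`
other than the tuple condition. -/
structure TSplit [DecidableEq V] (ρ : CRule F V) (ρ' : CRule (F ⊕ ℕ) V) (xs : List V) (σ : V → V)
    (cs : List (Term (F ⊕ ℕ) V × Term (F ⊕ ℕ) V)) : Prop where
  lhs_rename : ρ'.lhs.rename σ = ρ.lhs.mapF .inl
  rhs_eq : ρ'.rhs = ρ.rhs.mapF .inl
  conds_eq : ρ'.conds = cs ++
    [(.app (.inr xs.length) (xs.map .var), .app (.inr xs.length) (xs.map fun x => .var (σ x)))]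
  conds_rename : List.Forall₂ (fun c c' : Term _ V × Term _ V => c'.1 = c.1.mapF .inl ∧
    c'.2.rename σ = c.2.mapF .inl) ρ.conds cs
  map_of_notMem : ∀ x ∉ xs, σ x = x
  notMem_srcs : ∀ x ∈ xs, x ∉ ρ.srcs.flatMap Term.varList
  notMem_pats : ∀ x ∈ xs, x ∉ ρ.pats.flatMap Term.varList
  count_of_mem : ∀ x ∈ xs, (ρ'.boundVars ρ.conds.length).count x = 1
  count_of_notMem : ∀ x ∉ xs, (ρ'.boundVars ρ.conds.length).count x =
    if (ρ.pats.flatMap Term.varList).count x ≤ 1 then (ρ.pats.flatMap Term.varList).count x else 0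

variable [DecidableEq V]

theorem CRule.seqCount_pats_liftT (ρ : CRule F V) (x : V) :
    seqCount x ρ.liftT.pats = (ρ.pats.flatMap Term.varList).count x := by
  rw [seqCount_eq_count_flatMap]
  simp [liftT, pats, List.flatMap_map, Term.varList_mapF]

theorem forall₂_zip_map {α β γ : Type} {p : α → β → Prop} (g : α → γ) {as : List α} {bs : List β}
    (h : List.Forall₂ p as bs) :
    List.Forall₂ (fun a c => c.1 = g a ∧ p a c.2) as ((as.map g).zip bs) := by
  induction h with
  | nil => exact .nil
  | cons hab _ ih => exact .cons ⟨rfl, hab⟩ ih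

theorem IsTRule.exists_tSplit {ρ : CRule F V} {ρ' : CRule (F ⊕ ℕ) V} (h : IsTRule ρ ρ') :
    (ρ.conds = [] ∧ ρ' = ρ.liftT) ∨ ∃ xs σ cs, TSplit ρ ρ' xs σ cs := by
  refine h.imp_right ?_
  rintro ⟨-, xs, σ, l', ts', -, hfresh, hσ, hlen, hl', hts', hcount, hcount', rfl⟩
  have hts : List.Forall₂ (fun c t' => t'.rename σ = c.2.mapF .inl) ρ.conds ts' :=
    List.forall₂_iff_get.2 ⟨hlen.symm, hts'⟩
  have hbound : CRule.boundVars (ρ := ⟨l', ρ.rhs.mapF .inl,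
      ((ρ.conds.map fun c => c.1.mapF .inl).zip ts') ++ [(.app (.inr xs.length) (xs.map .var),
        .app (.inr xs.length) (xs.map fun x => .var (σ x)))]⟩) ρ.conds.length =
      (l' :: ts').flatMap Term.varList := by
    rw [CRule.boundVars, List.take_left' (by simp [hlen]), List.map_snd_zip (by simp [hlen]),
      List.flatMap_cons]
  have hoccurs {x : V} (hx : x ∈ xs) {t : Term F V}
      (ht : t ∈ ρ.lhs :: ρ.rhs :: ρ.conds.flatMap fun c => [c.1, c.2]) : x ∉ t.varList :=
    fun hxt => hfresh x hx (seqCount_pos_iff.2 ⟨t, ht, hxt⟩)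
  refine ⟨xs, σ, _, hl', rfl, rfl, forall₂_zip_map _ hts, hσ, ?_, ?_, ?_, ?_⟩
  · intro x hx
    rw [CRule.mem_srcs_flatMap]
    rintro (hxt | ⟨c, hc, hxt⟩)
    · exact hoccurs hx (by simp) hxt
    · exact hoccurs hx (by simpa using .inr (.inr ⟨_, _, hc, .inl rfl⟩)) hxt
  · intro x hx
    simp only [CRule.pats, List.flatMap_cons, List.mem_append, List.mem_flatMap, List.mem_map]
    rintro (hxt | ⟨_, ⟨c, hc, rfl⟩, hxt⟩)
    · exact hoccurs hx (by simp) hxt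
    · exact hoccurs hx (by simpa using .inr (.inr ⟨_, _, hc, .inr rfl⟩)) hxt
  · intro x hx
    rw [hbound, ← seqCount_eq_count_flatMap, hcount x hx]
  · intro x hx
    rw [hbound, ← seqCount_eq_count_flatMap, hcount' x hx, CRule.seqCount_pats_liftT]

theorem CRule.WLL.count_boundVars {ρ : CRule F V} (hW : ρ.WLL) {x : V}
    (hx : x ∈ ρ.srcs.flatMap Term.varList) : (ρ.boundVars ρ.conds.length).count x = 1 := by
  rw [CRule.boundVars_length, ← seqCount_eq_count_flatMap]
  exact hW x (by rwa [seqCount_eq_count_flatMap, List.count_pos_iff])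

theorem CRule.Det.subset_boundVars {ρ : CRule F V} (hD : ρ.Det) {j : ℕ}
    {c : Term F V × Term F V} (hc : ρ.conds[j]? = some c) : c.1.varList ⊆ ρ.boundVars j := by
  obtain ⟨hj, rfl⟩ := List.getElem?_eq_some_iff.1 hc
  intro x hx
  have hpos := hD j hj x (Term.count_pos_iff.2 hx)
  rwa [seqCount_eq_count_flatMap, List.count_pos_iff] at hpos

namespace TSplit

variable {ρ : CRule F V} {ρ' : CRule (F ⊕ ℕ) V} {xs : List V} {σ : V → V}
  {cs : List (Term (F ⊕ ℕ) V × Term (F ⊕ ℕ) V)}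

theorem length_conds (h : TSplit ρ ρ' xs σ cs) : ρ'.conds.length = ρ.conds.length + 1 := by
  rw [h.conds_eq, List.length_append, h.conds_rename.length_eq, List.length_singleton]

theorem getElem?_conds (h : TSplit ρ ρ' xs σ cs) {j : ℕ} (hj : j < ρ.conds.length)
    {c' : Term (F ⊕ ℕ) V × Term (F ⊕ ℕ) V} (hc' : ρ'.conds[j]? = some c') :
    ∃ c, ρ.conds[j]? = some c ∧ c'.1 = c.1.mapF .inl := by
  have hj' := h.conds_rename.length_eq ▸ hj
  rw [h.conds_eq, List.getElem?_append_left hj', List.getElem?_eq_getElem hj'] at hc'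
  obtain rfl := Option.some.inj hc'
  exact ⟨_, List.getElem?_eq_getElem hj, (h.conds_rename.get hj hj').1⟩

theorem getElem?_conds_length (h : TSplit ρ ρ' xs σ cs) : ρ'.conds[ρ.conds.length]? =
    some (.app (.inr xs.length) (xs.map .var),
      .app (.inr xs.length) (xs.map fun x => .var (σ x))) := by
  rw [h.conds_eq, h.conds_rename.length_eq, List.getElem?_concat_length]

theorem map_boundVars (h : TSplit ρ ρ' xs σ cs) {j : ℕ} (hj : j ≤ ρ.conds.length) :
    (ρ'.boundVars j).map σ = ρ.boundVars j := by
  have hconds : (cs.take j).map (fun c => c.2.varList.map σ) =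
      (ρ.conds.take j).map fun c => c.2.varList := by
    rw [← List.forall₂_eq_eq_eq, List.forall₂_map_left_iff, List.forall₂_map_right_iff]
    refine (List.forall₂_take j h.conds_rename).flip.imp fun c' c hc => ?_
    rw [← Term.varList_rename, hc.2, Term.varList_mapF]
  rw [CRule.boundVars, CRule.boundVars, List.map_append, ← Term.varList_rename, h.lhs_rename,
    Term.varList_mapF, h.conds_eq,
    List.take_append_of_le_length (h.conds_rename.length_eq ▸ hj), List.map_flatMap,
    List.flatMap_map, List.flatMap_map]
  exact congrArg _ (congrArg List.flatten hconds)

theorem nodup_boundVars (h : TSplit ρ ρ' xs σ cs) : (ρ'.boundVars ρ.conds.length).Nodup := by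
  rw [List.nodup_iff_count_le_one]
  intro x
  by_cases hx : x ∈ xs
  · exact (h.count_of_mem x hx).le
  · rw [h.count_of_notMem x hx]
    split
    · assumption
    · exact Nat.zero_le 1

theorem mem_boundVars (h : TSplit ρ ρ' xs σ cs) {x : V} (hx : x ∈ xs) :
    x ∈ ρ'.boundVars ρ.conds.length :=
  List.count_pos_iff.1 (h.count_of_mem x hx ▸ Nat.one_pos)

theorem map_notMem (h : TSplit ρ ρ' xs σ cs) {x : V} (hx : x ∈ xs) : σ x ∉ xs := by
  intro hσx
  refine h.notMem_pats _ hσx ?_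
  rw [← CRule.boundVars_length, ← h.map_boundVars le_rfl]
  exact List.mem_map_of_mem (h.mem_boundVars hx)

theorem map_map (h : TSplit ρ ρ' xs σ cs) (x : V) : σ (σ x) = σ x := by
  by_cases hx : x ∈ xs
  · exact h.map_of_notMem _ (h.map_notMem hx)
  · rw [h.map_of_notMem x hx, h.map_of_notMem x hx]

theorem map_notMem_boundVars (h : TSplit ρ ρ' xs σ cs) {x : V} (hx : x ∈ xs) :
    σ x ∉ ρ'.boundVars ρ.conds.length := by
  intro hσx
  have hne : x ≠ σ x := fun heq => h.map_notMem hx (heq ▸ hx)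
  have hpair : List.Subperm [x, σ x] (ρ'.boundVars ρ.conds.length) :=
    List.subperm_of_subset (by simp [hne]) (by simp [h.mem_boundVars hx, hσx])
  have htwo : 2 ≤ (ρ.pats.flatMap Term.varList).count (σ x) := by
    rw [← CRule.boundVars_length, ← h.map_boundVars le_rfl]
    obtain ⟨ys, hperm, hsub⟩ := hpair
    have hcount := (hsub.map σ).count_le (σ x)
    rw [(hperm.map σ).count_eq] at hcount
    simpa [h.map_map] using hcount
  have hzero := h.count_of_notMem _ (h.map_notMem hx)
  rw [if_neg (by omega)] at hzero
  exact List.count_eq_zero.1 hzero hσx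

theorem count_boundVars_of_mem_srcs (h : TSplit ρ ρ' xs σ cs) (hW : ρ.WLL) {x : V}
    (hx : x ∈ ρ.srcs.flatMap Term.varList) : (ρ'.boundVars ρ.conds.length).count x = 1 := by
  have honce := hW.count_boundVars hx
  rw [CRule.boundVars_length] at honce
  rw [h.count_of_notMem x fun hxs => h.notMem_srcs x hxs hx, honce, if_pos le_rfl]

theorem mem_boundVars_of_mem_srcs (h : TSplit ρ ρ' xs σ cs) (hW : ρ.WLL) {x : V}
    (hx : x ∈ ρ.srcs.flatMap Term.varList) {j : ℕ} (hj : j ≤ ρ.conds.length)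
    (hxj : x ∈ ρ.boundVars j) : x ∈ ρ'.boundVars j := by
  have hcount := h.count_boundVars_of_mem_srcs hW hx
  rw [← h.map_boundVars hj, List.mem_map] at hxj
  obtain ⟨y, hy, rfl⟩ := hxj
  by_cases hyx : y ∈ xs
  · exact (h.map_notMem_boundVars hyx (List.count_pos_iff.1 (hcount ▸ Nat.one_pos))).elim
  · rwa [h.map_of_notMem y hyx]

theorem boundVars_succ_length (h : TSplit ρ ρ' xs σ cs) :
    ρ'.boundVars (ρ.conds.length + 1) = ρ'.boundVars ρ.conds.length ++ xs.map σ := by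
  rw [CRule.boundVars_succ h.getElem?_conds_length]
  rw [Term.varList_app_map_var]

theorem cond_cases (h : TSplit ρ ρ' xs σ cs) {j : ℕ} {c' : Term (F ⊕ ℕ) V × Term (F ⊕ ℕ) V}
    (hc' : ρ'.conds[j]? = some c') :
    (j < ρ.conds.length ∧ ∃ c, ρ.conds[j]? = some c ∧ c'.1 = c.1.mapF .inl) ∨
      j = ρ.conds.length ∧ c'.1.varList = xs ∧ c'.2.varList = xs.map σ := by
  have hj := (List.getElem?_eq_some_iff.1 hc').1
  rw [h.length_conds] at hj
  obtain hlt | rfl := (Nat.le_of_lt_succ hj).lt_or_eq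
  · exact .inl ⟨hlt, h.getElem?_conds hlt hc'⟩
  · obtain rfl := Option.some.inj (h.getElem?_conds_length.symm.trans hc')
    exact .inr ⟨rfl, (Term.varList_app_map_var _ id xs).trans xs.map_id,
      Term.varList_app_map_var _ σ xs⟩

theorem srAdmissible (h : TSplit ρ ρ' xs σ cs) (hW : ρ.WLL) (hD : ρ.Det) : SRAdmissible ρ' where
  nodup j hj := by
    rw [h.length_conds] at hj
    exact h.nodup_boundVars.sublist (ρ'.boundVars_prefix (Nat.le_of_lt_succ hj)).sublist
  disjoint j c hc := by
    obtain ⟨hlt, -⟩ | ⟨rfl, -, hc₂⟩ := h.cond_cases hc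
    · have hnodup := h.nodup_boundVars.sublist (ρ'.boundVars_prefix hlt).sublist
      rw [CRule.boundVars_succ hc] at hnodup
      exact List.disjoint_of_nodup_append hnodup
    · rw [hc₂, List.disjoint_comm]
      exact List.forall_mem_map.2 fun x hx => h.map_notMem_boundVars hx
  rhs_once x hx := by
    rw [h.rhs_eq, Term.varList_mapF] at hx
    have honce := h.count_boundVars_of_mem_srcs hW (CRule.mem_srcs_flatMap.2 (.inl hx))
    have hxs : x ∉ xs.map σ := by
      rw [List.mem_map]
      rintro ⟨y, hy, rfl⟩
      exact h.map_notMem_boundVars hy (List.count_pos_iff.1 (honce ▸ Nat.one_pos))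
    rw [h.length_conds, h.boundVars_succ_length, List.count_append, honce,
      List.count_eq_zero_of_not_mem hxs]
  det j c hc x hx := by
    obtain ⟨hlt, d, hd, hcd⟩ | ⟨rfl, hc₁, -⟩ := h.cond_cases hc
    · rw [hcd, Term.varList_mapF] at hx
      have hsrc := CRule.mem_srcs_flatMap.2 (.inr ⟨d, List.mem_of_getElem? hd, hx⟩)
      exact h.mem_boundVars_of_mem_srcs hW hsrc hlt.le (hD.subset_boundVars hd hx)
    · exact h.mem_boundVars (hc₁ ▸ hx)

end TSplit

theorem IsTRule.srAdmissible {ρ : CRule F V} {ρ' : CRule (F ⊕ ℕ) V} (h : IsTRule ρ ρ')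
    (hW : ρ.WLL) (hD : ρ.Det) : SRAdmissible ρ' := by
  obtain ⟨hconds, rfl⟩ | ⟨xs, σ, cs, hsplit⟩ := h.exists_tSplit
  · refine ⟨by simp [CRule.liftT, hconds], by simp [CRule.liftT, hconds], fun x hx => ?_,
      by simp [CRule.liftT, hconds]⟩
    rw [CRule.liftT, Term.varList_mapF] at hx
    have honce := hW.count_boundVars (CRule.mem_srcs_flatMap.2 (.inl hx))
    simpa [CRule.liftT, CRule.boundVars, hconds, Term.varList_mapF] using honce
  · exact hsplit.srAdmissible hW hD

end TSplit

section TReduction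

open Relation

variable {F V : Type} {R : CTRS F V} {R' : CTRS (F ⊕ ℕ) V}

theorem CRule.liftT_lhs_subst_ne {ρ : CRule F V} (h : ρ.LhsNonVar) (θ : V → Term (F ⊕ ℕ) V) (n : ℕ)
    (ts : List (Term (F ⊕ ℕ) V)) : ρ.liftT.lhs.subst θ ≠ .app (.inr n) ts := by
  cases hl : ρ.lhs with
  | var x => exact (h x hl).elim
  | app f ws => simp [liftT, hl]

namespace TSplit

variable [DecidableEq V] {ρ : CRule F V} {ρ' : CRule (F ⊕ ℕ) V} {xs : List V} {σ : V → V}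
  {cs : List (Term (F ⊕ ℕ) V × Term (F ⊕ ℕ) V)}

theorem map_of_mem_srcs (h : TSplit ρ ρ' xs σ cs) {x : V}
    (hx : x ∈ ρ.srcs.flatMap Term.varList) : σ x = x :=
  h.map_of_notMem x fun hxs => h.notMem_srcs x hxs hx

theorem exists_mem_conds (h : TSplit ρ ρ' xs σ cs) {c : Term F V × Term F V} (hc : c ∈ ρ.conds) :
    ∃ c' ∈ cs, c'.1 = c.1.mapF .inl ∧ c'.2.rename σ = c.2.mapF .inl := by
  obtain ⟨j, hj, rfl⟩ := List.mem_iff_getElem.1 hc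
  have hj' := h.conds_rename.length_eq ▸ hj
  exact ⟨_, List.getElem_mem hj', h.conds_rename.get hj hj'⟩

theorem exists_mem_conds_of_mem (h : TSplit ρ ρ' xs σ cs)
    {c' : Term (F ⊕ ℕ) V × Term (F ⊕ ℕ) V} (hc' : c' ∈ cs) :
    ∃ c ∈ ρ.conds, c'.1 = c.1.mapF .inl ∧ c'.2.rename σ = c.2.mapF .inl := by
  obtain ⟨j, hj', rfl⟩ := List.mem_iff_getElem.1 hc'
  have hj := h.conds_rename.length_eq ▸ hj'
  exact ⟨_, List.getElem_mem hj, h.conds_rename.get hj hj'⟩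

theorem red (h : TSplit ρ ρ' xs σ cs) (hρ' : ρ' ∈ R') (θ : V → Term F V)
    (hconds : ∀ c ∈ ρ.conds, RedStar R' ((c.1.subst θ).mapF .inl) ((c.2.subst θ).mapF .inl)) :
    Red R' ((ρ.lhs.subst θ).mapF .inl) ((ρ.rhs.subst θ).mapF .inl) := by
  let θ' : V → Term (F ⊕ ℕ) V := fun x => (θ (σ x)).mapF .inl
  have hpat {t : Term F V} {t' : Term (F ⊕ ℕ) V} (ht : t'.rename σ = t.mapF .inl) :
      t'.subst θ' = (t.subst θ).mapF .inl := by
    rw [Term.mapF_subst, ← ht, Term.subst_rename]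
    rfl
  have hsrc {t : Term F V} (ht : ∀ x ∈ t.varList, x ∈ ρ.srcs.flatMap Term.varList) :
      (t.mapF .inl).subst θ' = (t.subst θ).mapF .inl := by
    rw [Term.mapF_subst]
    refine Term.subst_congr fun x hx => ?_
    rw [Term.varList_mapF] at hx
    exact congrArg (fun y => (θ y).mapF Sum.inl) (h.map_of_mem_srcs (ht x hx))
  rw [← hpat h.lhs_rename, ← hsrc fun x hx => CRule.mem_srcs_flatMap.2 (.inl hx), ← h.rhs_eq]
  refine Red.rule hρ' θ' ?_
  rw [h.conds_eq, List.forall_mem_append, List.forall_mem_singleton]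
  constructor
  · intro c' hc'
    obtain ⟨c, hc, hc₁, hc₂⟩ := h.exists_mem_conds_of_mem hc'
    rw [hc₁, hpat hc₂, hsrc fun x hx => CRule.mem_srcs_flatMap.2 (.inr ⟨c, hc, hx⟩)]
    exact hconds c hc
  · simp only [Term.subst_app, List.map_map, Function.comp_def, Term.subst_var, θ', h.map_map]
    exact .refl

/-- Soundness of a rule of `𝕋(R)`: the tuple condition makes `θ x` reduce to `θ (σ x)` for every
introduced variable `x`, so an instance of a renamed pattern reduces to an instance of the
original one. -/
theorem redStar_liftT (h : TSplit ρ ρ' xs σ cs) (hR : ∀ ρ ∈ R, ρ.LhsNonVar) (hρ : ρ ∈ R)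
    (θ : V → Term (F ⊕ ℕ) V)
    (hconds : ∀ c ∈ ρ'.conds, RedStar (CRule.liftT '' R) (c.1.subst θ) (c.2.subst θ)) :
    RedStar (CRule.liftT '' R) (ρ'.lhs.subst θ) (ρ'.rhs.subst θ) := by
  rw [h.conds_eq, List.forall_mem_append, List.forall_mem_singleton] at hconds
  obtain ⟨hcs, htuple⟩ := hconds
  have hσ (x : V) : RedStar (CRule.liftT '' R) (θ x) (θ (σ x)) := by
    by_cases hx : x ∈ xs
    · simp only [Term.subst_app, List.map_map] at htuple
      obtain ⟨ts, hts, hforall⟩ := htuple.app_inv <|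
        Set.forall_mem_image.2 fun ρ hρ θ ts => CRule.liftT_lhs_subst_ne (hR ρ hρ) θ _ ts
      obtain rfl := (Term.app.inj hts).2
      rw [List.forall₂_map_left_iff, List.forall₂_map_right_iff, List.forall₂_same] at hforall
      simpa using hforall x hx
    · rw [h.map_of_notMem x hx]
      exact .refl
  have hpat {t : Term F V} {t' : Term (F ⊕ ℕ) V} (ht : t'.rename σ = t.mapF .inl) :
      RedStar (CRule.liftT '' R) (t'.subst θ) ((t.mapF .inl).subst θ) := by
    rw [← ht, Term.subst_rename]
    exact RedStar.subst fun x _ => hσ x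
  rw [h.rhs_eq]
  refine (hpat h.lhs_rename).tail (Red.rule (Set.mem_image_of_mem _ hρ) θ ?_)
  refine List.forall_mem_map.2 fun c hc => ?_
  obtain ⟨c', hc', hc₁, hc₂⟩ := h.exists_mem_conds hc
  exact hc₁ ▸ (hcs c' hc').trans (hpat hc₂)

end TSplit

/-- The term over `F` obtained by replacing every maximal subterm rooted at a symbol of the
second signature by `d`; the total counterpart of `unliftT`, under which rewriting with the
lifted rules becomes rewriting with `R`. -/
def Term.project (d : Term F V) : Term (F ⊕ ℕ) V → Term F V
  | .var x => .var x
  | .app (.inl f) ts => .app f (ts.attach.map fun ⟨t, _⟩ => project d t)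
  | .app (.inr _) _ => d

theorem Term.project_app_inl (d : Term F V) (f : F) (ts : List (Term (F ⊕ ℕ) V)) :
    project d (.app (.inl f) ts) = .app f (ts.map (project d)) := by
  simp [project]

theorem Term.project_subst (d : Term F V) (θ : V → Term (F ⊕ ℕ) V) (t : Term F V) :
    project d ((t.mapF .inl).subst θ) = t.subst fun x => project d (θ x) := by
  induction t with
  | var x => simp
  | app f ts ih =>
    rw [mapF_app, subst_app, project_app_inl, subst_app, List.map_map, List.map_map]
    exact congrArg _ (List.map_congr_left ih)

theorem Term.project_mapF (d t : Term F V) : project d (t.mapF .inl) = t := by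
  have h := project_subst d .var t
  simpa only [project, subst_var_eq_self] using h

theorem RedStar.project (d : Term F V) {s t : Term (F ⊕ ℕ) V}
    (h : RedStar (CRule.liftT '' R) s t) : RedStar R (Term.project d s) (Term.project d t) := by
  refine h.map _ (fun f pre post s t hst => ?_) (Set.forall_mem_image.2 fun ρ hρ θ hconds => ?_)
  · cases f with
    | inl f =>
      simp only [Term.project_app_inl, List.map_append, List.map_cons]
      exact hst.congr
    | inr n =>
      simp only [Term.project]
      exact .refl
  · simp only [CRule.liftT, List.forall_mem_map, Term.project_subst] at hconds ⊢
    exact .single (Red.rule hρ _ hconds)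

theorem eq_mapF_of_unliftT {u : Term (F ⊕ ℕ) V} {u₀ : Term F V} (h : unliftT u = some u₀) :
    u = u₀.mapF .inl := by
  induction u generalizing u₀ with
  | var x =>
    rw [unliftT] at h
    obtain rfl := Option.some.inj h
    rw [Term.mapF_var]
  | app f us ih =>
    cases f with
    | inr n => simp [unliftT] at h
    | inl f =>
      rw [unliftT, List.mapM_subtype (g := unliftT) fun _ _ => rfl, List.unattach_attach,
        Option.map_eq_some_iff] at h
      obtain ⟨us₀, hus, rfl⟩ := h
      rw [mapM_eq_some_iff] at hus
      rw [Term.mapF_app]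
      refine congrArg _ ?_
      rw [← List.forall₂_eq_eq_eq, List.forall₂_map_right_iff]
      exact (forall₂_and_mem hus).imp fun u u₀ hu => ih u hu.1 hu.2

variable [DecidableEq V]

theorem IsTRule.redStar_liftT {ρ : CRule F V} {ρ' : CRule (F ⊕ ℕ) V} (h : IsTRule ρ ρ')
    (hR : ∀ ρ ∈ R, ρ.LhsNonVar) (hρ : ρ ∈ R) (θ : V → Term (F ⊕ ℕ) V)
    (hconds : ∀ c ∈ ρ'.conds, RedStar (CRule.liftT '' R) (c.1.subst θ) (c.2.subst θ)) :
    RedStar (CRule.liftT '' R) (ρ'.lhs.subst θ) (ρ'.rhs.subst θ) := by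
  obtain ⟨-, rfl⟩ | ⟨xs, σ, cs, hsplit⟩ := h.exists_tSplit
  · exact .single (Red.rule (Set.mem_image_of_mem _ hρ) θ hconds)
  · exact hsplit.redStar_liftT hR hρ θ hconds

theorem IsTRule.red {ρ : CRule F V} {ρ' : CRule (F ⊕ ℕ) V} (h : IsTRule ρ ρ') (hρ' : ρ' ∈ R')
    (θ : V → Term F V)
    (hconds : ∀ c ∈ ρ.conds, RedStar R' ((c.1.subst θ).mapF .inl) ((c.2.subst θ).mapF .inl)) :
    Red R' ((ρ.lhs.subst θ).mapF .inl) ((ρ.rhs.subst θ).mapF .inl) := by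
  obtain ⟨-, rfl⟩ | ⟨xs, σ, cs, hsplit⟩ := h.exists_tSplit
  · simp only [Term.mapF_subst] at hconds ⊢
    exact Red.rule hρ' _ (List.forall_mem_map.2 hconds)
  · exact hsplit.red hρ' θ hconds

theorem IsT.sound (hT : IsT R R') (hR : ∀ ρ ∈ R, ρ.LhsNonVar) {s t : Term F V}
    (h : RedStar R' (s.mapF .inl) (t.mapF .inl)) : RedStar R s t := by
  have hlift : RedStar (CRule.liftT '' R) (s.mapF .inl) (t.mapF .inl) := by
    refine h.map id (fun _ _ _ _ _ => RedStar.congr) fun ρ' hρ' θ hconds => ?_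
    obtain ⟨ρ, hρ, hρρ'⟩ := hT.2 ρ' hρ'
    exact hρρ'.redStar_liftT hR hρ θ hconds
  have hproj := hlift.project s
  rwa [Term.project_mapF, Term.project_mapF] at hproj

theorem IsT.complete (hT : IsT R R') {s t : Term F V} (h : RedStar R s t) :
    RedStar R' (s.mapF .inl) (t.mapF .inl) := by
  refine h.map (Term.mapF Sum.inl) (fun f pre post s t hst => ?_) fun ρ hρ θ hconds => ?_
  · simp only [Term.mapF_app, List.map_append, List.map_cons]
    exact hst.congr
  · obtain ⟨ρ', hρ', hρρ'⟩ := hT.1 ρ hρ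
    exact .single (hρρ'.red hρ' θ hconds)

end TReduction

theorem SR_T_sound_and_complete_general {F V : Type} [DecidableEq V] {R : CTRS F V}
    (hD : ∀ ρ ∈ R, ρ.Det) (hN : ∀ ρ ∈ R, ρ.LhsNonVar) (hW : IsWLL R) {R' : CTRS (F ⊕ ℕ) V}
    (hT : IsT R R') {ar mOf : F ⊕ ℕ → ℕ} {idx : CRule (F ⊕ ℕ) V → ℕ}
    (hS : SlotSetup R' ar mOf idx) {s : Term F V} (hs : (s.mapF Sum.inl).WF ar) :
    (∀ t, RedStar (SRSys R' ar mOf idx) (guardT (barT mOf (s.mapF Sum.inl))) t →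
      ∃ u, hatT ar t = some u ∧ ∀ u₀, unliftT u = some u₀ → RedStar R s u₀) ∧
    ∀ t, RedStar R s t → RedStar (SRSys R' ar mOf idx) (guardT (barT mOf (s.mapF Sum.inl)))
      (guardT (barT mOf (t.mapF Sum.inl))) := by
  have hA : ∀ ρ' ∈ R', SRAdmissible ρ' := fun ρ' hρ' =>
    have ⟨ρ, hρ, hρρ'⟩ := hT.2 ρ' hρ'
    hρρ'.srAdmissible (hW ρ hρ) (hD ρ hρ)
  constructor
  · intro t ht
    obtain ⟨u, hu, hsu⟩ := SRSys.sound hS hA hs ht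
    refine ⟨u, hu, fun u₀ hu₀ => hT.sound hN ?_⟩
    rwa [← eq_mapF_of_unliftT hu₀]
  · intro t hst
    refine SRSys.complete hS (fun ρ' hρ' => (hA ρ' hρ').det) (fun ρ' hρ' x hx => ?_) hs
      (hT.complete hst)
    exact List.count_pos_iff.1 ((hA ρ' hρ').rhs_once x hx ▸ Nat.one_pos)

/-- **Soundness and completeness of the composed transformation `SR ∘ 𝕋` for
WLL DCTRSs.**  For every WLL DCTRS `R` over `F`:
(soundness) for every `s ∈ T(F,V)` and every term `t` over the signature of
`SR(𝕋(R))`, if `⟨s̄⟩ →*_{SR(𝕋(R))} t`, then `s →*_R t̂` whenever the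
backtranslation `t̂` (into `T(F,V)`) is defined; and
(completeness) for all `s, t ∈ T(F,V)`, `s →*_R t` implies
`⟨s̄⟩ →*_{SR(𝕋(R))} ⟨t̄⟩`. -/
theorem SR_T_sound_and_complete {F V : Type} [DecidableEq V]
    (R : CTRS F V) (hD : IsDCTRS R) (hW : IsWLL R)
    (R' : CTRS (F ⊕ ℕ) V) (hT : IsT R R')
    (ar mOf : (F ⊕ ℕ) → ℕ) (idx : CRule (F ⊕ ℕ) V → ℕ)
    (hS : GoodSetup R' ar mOf idx) :
    (∀ s : Term F V, (s.mapF Sum.inl).WF ar →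
       ∀ t : STerm (F ⊕ ℕ) V,
         RedStar (SRSys R' ar mOf idx) (guardT (barT mOf (s.mapF Sum.inl))) t →
         ∀ (u : Term (F ⊕ ℕ) V) (u₀ : Term F V),
           hatT ar t = some u → unliftT u = some u₀ →
           RedStar R s u₀) ∧
    (∀ s t : Term F V, (s.mapF Sum.inl).WF ar → (t.mapF Sum.inl).WF ar →
       RedStar R s t →
       RedStar (SRSys R' ar mOf idx) (guardT (barT mOf (s.mapF Sum.inl)))
         (guardT (barT mOf (t.mapF Sum.inl)))) := by
  have hgeneral {s : Term F V} := SR_T_sound_and_complete_general (s := s)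
    (fun ρ hρ => (hD ρ hρ).1) (fun ρ hρ => (hD ρ hρ).2.2) hW hT hS.slotSetup
  refine ⟨fun s hs t ht u u₀ hu hu₀ => ?_, fun s t hs _ => (hgeneral hs).2 t⟩
  obtain ⟨v, hv, hsound⟩ := (hgeneral hs).1 t ht
  exact hsound u₀ (Option.some.inj (hv.symm.trans hu) ▸ hu₀)
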